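/- arXiv:1612.08439 — 2 statements merged into one kernel-verified Lean document; each statement's English description precedes it below -/
import Mathlib

section
/- There exists a homeomorphism f of the open annulus 𝔸 = 𝕋¹ × ℝ which is irrotational, preserves a Borel probability measure of full support, and, denoting by f̌ its irrotational lift to ℝ², satisfies: (1) there is an open topological disk U ⊆ 𝔸 with π(Fix(f̌)) ⊆ U; (2) every connected component of Fix(f) is compact; (3) for every real number η > 0 and every integer j ≥ 1 there exist a point ž ∈ [0,η] × [j, j+1] ⊆ ℝ² and an integer n ≥ 1 such that f̌ⁿ(ž) ∈ [j, j+η] × [j, j+1]; (4) writing f(x,y) = (f₁(x,y), f₂(x,y)), one has f₂(x,y) → +∞ and dist_{𝕋¹}(f₁(x,y), x) → 0 as y → +∞, uniformly in x (that is, f extends continuously to 𝕋¹ × (−∞,+∞] as the identity on the circle 𝕋¹ × {+∞}). -/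
open MeasureTheory Filter Topology Set

noncomputable section

/-- The circle `𝕋¹ = ℝ/ℤ`. -/
abbrev T1 : Type := AddCircle (1 : ℝ)

/-- The open annulus `𝔸 = 𝕋¹ × ℝ`. -/
abbrev Ann : Type := T1 × ℝ

/-- The universal covering map `π : ℝ² → 𝔸`, `π(x,y) = (x + ℤ, y)`. -/
def pA : ℝ × ℝ → Ann := fun z => ((z.1 : T1), z.2)

/-- An open topological disk of `𝔸`: a nonempty open connected simply connected subset. -/
def IsOpenTopDisk (U : Set Ann) : Prop :=
  IsOpen U ∧ IsConnected U ∧ SimplyConnectedSpace U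

/-- `f` is isotopic to the identity. -/
def IsotopicToId (f : Ann ≃ₜ Ann) : Prop :=
  ∃ H : ℝ × Ann → Ann, ContinuousOn H (Set.Icc (0:ℝ) 1 ×ˢ Set.univ) ∧
    (∀ z, H (0, z) = z) ∧ (∀ z, H (1, z) = f z) ∧
    ∀ t ∈ Set.Icc (0:ℝ) 1, ∃ g : Ann ≃ₜ Ann, ∀ z, H (t, z) = g z

/-- `μ` is an `f`-invariant Borel probability measure of full support. -/
def InvariantFullMeasure (f : Ann ≃ₜ Ann) (μ : Measure Ann) : Prop :=
  IsProbabilityMeasure μ ∧ Measure.map f μ = μ ∧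
    ∀ U : Set Ann, IsOpen U → U.Nonempty → 0 < μ U

/-- `fc` is a lift of `f` to the universal covering `ℝ²`. -/
def IsLift (f : Ann ≃ₜ Ann) (fc : (ℝ × ℝ) ≃ₜ (ℝ × ℝ)) : Prop :=
  ∀ z, pA (fc z) = f (pA z)

/-- The rotation set of `fc` relative to a compact set `K`. -/
def rotK (fc : (ℝ × ℝ) ≃ₜ (ℝ × ℝ)) (K : Set Ann) : Set EReal :=
  {ρ | ∃ (z : ℕ → ℝ × ℝ) (n : ℕ → ℕ), Tendsto n atTop atTop ∧
    (∀ k, pA (z k) ∈ K ∧ pA ((⇑fc)^[n k] (z k)) ∈ K) ∧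
    Tendsto (fun k => (((((⇑fc)^[n k] (z k)).1 - (z k).1) / (n k) : ℝ) : EReal))
      atTop (nhds ρ)}

/-- The rotation set of `fc`. -/
def rot (fc : (ℝ × ℝ) ≃ₜ (ℝ × ℝ)) : Set EReal :=
  closure (⋃ (K : Set Ann) (_ : IsCompact K), rotK fc K)

/-- Alternative `(1)` in Theorems A and B: existence of non-contractible
periodic points of arbitrarily large prime period. -/
def NonContractibleAlt (fc : (ℝ × ℝ) ≃ₜ (ℝ × ℝ)) : Prop :=
  ∃ q : ℕ, 1 ≤ q ∧ ∀ r s : ℕ, 0 < r → 0 < s → Nat.Coprime r s → (r : ℝ) / s ≤ 1 / q →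
    (∃ z : ℝ × ℝ, (⇑fc)^[s] z + ((r : ℝ), 0) = z) ∨
    (∃ z : ℝ × ℝ, (⇑fc)^[s] z - ((r : ℝ), 0) = z)

/-! ### The explicit flow -/

/-- unit complex number attached to a point of the circle -/
def ee (x : T1) : ℂ := (AddCircle.toCircle x : ℂ)

lemma ee_coe (x : ℝ) : ee (x : T1) = Complex.exp ((2 * Real.pi * x : ℝ) * Complex.I) := by
  unfold ee
  rw [AddCircle.toCircle_apply_mk, Circle.coe_exp]
  simp

lemma ee_add (x y : T1) : ee (x + y) = ee x * ee y := by
  unfold ee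
  rw [AddCircle.toCircle_add, Circle.coe_mul]

lemma ee_zero : ee 0 = 1 := by
  unfold ee; simp

lemma ee_inj {x y : T1} (h : ee x = ee y) : x = y :=
  AddCircle.injective_toCircle one_ne_zero (Subtype.ext h)

lemma norm_ee (x : T1) : ‖ee x‖ = 1 := Circle.norm_coe _

lemma ee_sq (x : T1) : (ee x).re ^ 2 + (ee x).im ^ 2 = 1 := by
  have h := Complex.sq_norm (ee x)
  rw [norm_ee, Complex.normSq_apply] at h
  nlinarith

@[fun_prop]
lemma continuous_ee : Continuous ee :=
  continuous_subtype_val.comp AddCircle.continuous_toCircle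

lemma sq1_pos (w : ℝ) : 0 < Real.sqrt (1 + w ^ 2) := Real.sqrt_pos.2 (by positivity)

lemma sq1_sq (w : ℝ) : Real.sqrt (1 + w ^ 2) ^ 2 = 1 + w ^ 2 := Real.sq_sqrt (by positivity)

lemma sq1_ge (w : ℝ) : 1 ≤ Real.sqrt (1 + w ^ 2) := by
  rw [Real.one_le_sqrt]; nlinarith [sq_nonneg w]

/-- the first integral -/
def ZZ (z : Ann) : ℝ := (ee z.1).im / Real.sqrt (1 + z.2 ^ 2)

lemma ZZ_mul (z : Ann) : ZZ z * Real.sqrt (1 + z.2 ^ 2) = (ee z.1).im := by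
  unfold ZZ
  field_simp [(sq1_pos z.2).ne']

lemma ZZ_rel (z : Ann) : (ee z.1).re ^ 2 + (ZZ z) ^ 2 * (1 + z.2 ^ 2) = 1 := by
  rw [← sq1_sq, ← mul_pow, ZZ_mul]; exact ee_sq _

@[fun_prop]
lemma continuous_ZZ : Continuous ZZ := by
  unfold ZZ
  apply Continuous.div
  · exact Complex.continuous_im.comp (continuous_ee.comp continuous_fst)
  · fun_prop
  · intro z; exact (sq1_pos z.2).ne'

def Wf (c s : ℝ) (z : Ann) : ℝ := z.2 * c + (ee z.1).re * s

def Ef (c s d : ℝ) (z : Ann) : ℂ :=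
  ⟨(ee z.1).re * c - z.2 * d, ZZ z * Real.sqrt (1 + (Wf c s z) ^ 2)⟩

def Df (c s d : ℝ) (z : Ann) : ℝ :=
  Complex.arg (Ef c s d z * (starRingEnd ℂ) (ee z.1)) / (2 * Real.pi)

def Gf (c s d : ℝ) (z : Ann) : Ann := (z.1 + ((Df c s d z : ℝ) : T1), Wf c s z)

def Good (c s d Z : ℝ) : Prop := c ^ 2 + s * d = 1 ∧ d = Z ^ 2 * s

lemma norm_Ef {c s d : ℝ} {z : Ann} (h : Good c s d (ZZ z)) : ‖Ef c s d z‖ = 1 := by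
  have h2 : ‖Ef c s d z‖ ^ 2 = 1 := by
    rw [Complex.sq_norm, Complex.normSq_apply]
    simp only [Ef]
    have h3 := sq1_sq (Wf c s z)
    have h4 := ZZ_rel z
    obtain ⟨h5, h6⟩ := h
    have : ZZ z * Real.sqrt (1 + (Wf c s z) ^ 2) * (ZZ z * Real.sqrt (1 + (Wf c s z) ^ 2))
      = ZZ z ^ 2 * (1 + (Wf c s z) ^ 2) := by
      linear_combination (ZZ z ^ 2) * h3
    rw [this]
    simp only [Wf]
    generalize ZZ z = Z at *
    generalize (ee z.1).re = p at *
    generalize z.2 = w at *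
    subst h6
    have h7 : p ^ 2 = 1 - Z ^ 2 * (1 + w ^ 2) := by linarith
    have h8 : c ^ 2 = 1 - s * (Z ^ 2 * s) := by linarith
    linear_combination (c ^ 2 + Z ^ 2 * s ^ 2) * h7 + (1 - Z ^ 2) * h8
  have := norm_nonneg (Ef c s d z)
  nlinarith

lemma norm_mul_conj {c s d : ℝ} {z : Ann} (h : Good c s d (ZZ z)) :
    ‖Ef c s d z * (starRingEnd ℂ) (ee z.1)‖ = 1 := by
  rw [norm_mul, norm_Ef h, Complex.norm_conj, norm_ee, one_mul]

lemma ee_Gf {c s d : ℝ} {z : Ann} (h : Good c s d (ZZ z)) :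
    ee (Gf c s d z).1 = Ef c s d z := by
  have hp := Real.pi_pos
  simp only [Gf]
  rw [ee_add, ee_coe]
  have h1 : 2 * Real.pi * Df c s d z = Complex.arg (Ef c s d z * (starRingEnd ℂ) (ee z.1)) := by
    unfold Df; field_simp
  rw [h1]
  have h2 := Complex.norm_mul_exp_arg_mul_I (Ef c s d z * (starRingEnd ℂ) (ee z.1))
  rw [norm_mul_conj h] at h2
  simp only [Complex.ofReal_one, one_mul] at h2
  rw [h2]
  have h3 : ee z.1 * (starRingEnd ℂ) (ee z.1) = 1 := by
    rw [Complex.mul_conj, ← Complex.sq_norm, norm_ee]; simp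
  linear_combination (Ef c s d z) * h3

lemma ZZ_Gf {c s d : ℝ} {z : Ann} (h : Good c s d (ZZ z)) : ZZ (Gf c s d z) = ZZ z := by
  conv_lhs => unfold ZZ
  rw [ee_Gf h]
  simp only [Ef, Gf]
  rw [mul_div_assoc, div_self (sq1_pos _).ne', mul_one]

lemma Ann_ext {z z' : Ann} (h1 : ee z.1 = ee z'.1) (h2 : z.2 = z'.2) : z = z' :=
  Prod.ext (ee_inj h1) h2

lemma Good_comp {c s d c' s' d' Z : ℝ} (h : Good c s d Z) (h' : Good c' s' d' Z) :
    Good (c * c' - s' * d) (s * c' + c * s') (d * c' + c * d') Z := by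
  obtain ⟨h1, h2⟩ := h
  obtain ⟨h3, h4⟩ := h'
  subst h2 h4
  constructor
  · linear_combination (c' ^ 2 + s' * (Z ^ 2 * s')) * h1 + h3
  · ring

lemma Gf_comp {c s d c' s' d' : ℝ} {z : Ann} (h : Good c s d (ZZ z))
    (h' : Good c' s' d' (ZZ z)) :
    Gf c' s' d' (Gf c s d z) = Gf (c * c' - s' * d) (s * c' + c * s') (d * c' + c * d') z := by
  have hZ := ZZ_Gf h
  have h'' : Good c' s' d' (ZZ (Gf c s d z)) := by rw [hZ]; exact h'
  have hW : Wf c' s' (Gf c s d z) = Wf (c * c' - s' * d) (s * c' + c * s') z := by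
    unfold Wf
    rw [ee_Gf h]
    simp only [Gf, Ef, Wf]
    ring
  apply Ann_ext
  · rw [ee_Gf h'', ee_Gf (Good_comp h h')]
    apply Complex.ext
    · simp only [Ef]
      rw [ee_Gf h]
      obtain ⟨h1, h2⟩ := h
      obtain ⟨h3, h4⟩ := h'
      simp only [Gf, Ef, Wf]
      rw [h2, h4]
      ring
    · simp only [Ef]
      rw [hW, hZ]
  · exact hW

lemma slit {c s d : ℝ} {z : Ann} (h : Good c s d (ZZ z)) (hc : ZZ z = 0 → c = 1) :
    Ef c s d z * (starRingEnd ℂ) (ee z.1) ∈ Complex.slitPlane := by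
  by_contra hn
  set ζ := Ef c s d z * (starRingEnd ℂ) (ee z.1) with hζ
  have hnorm : ‖ζ‖ = 1 := norm_mul_conj h
  rw [Complex.mem_slitPlane_iff] at hn
  push Not at hn
  have h1 : ζ = -1 := by
    have h2 := Complex.sq_norm ζ
    rw [hnorm, Complex.normSq_apply, hn.2] at h2
    apply Complex.ext
    · simp; nlinarith
    · simp [hn.2]
  have h3 : (starRingEnd ℂ) (ee z.1) * ee z.1 = 1 := by
    rw [mul_comm, Complex.mul_conj, ← Complex.sq_norm, norm_ee]; simp
  have h4 : Ef c s d z = - ee z.1 := by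
    have : ζ * ee z.1 = Ef c s d z := by rw [hζ, mul_assoc, h3, mul_one]
    rw [← this, h1]; ring
  have him := congrArg Complex.im h4
  have hre := congrArg Complex.re h4
  simp only [Ef, Complex.neg_im, Complex.neg_re] at him hre
  rw [← ZZ_mul z] at him
  have h5 : ZZ z = 0 := by
    have : ZZ z * (Real.sqrt (1 + (Wf c s z) ^ 2) + Real.sqrt (1 + z.2 ^ 2)) = 0 := by linarith
    rcases mul_eq_zero.1 this with h | h
    · exact h
    · have := sq1_pos (Wf c s z); have := sq1_pos z.2; linarith
  have hd : d = 0 := by rw [h.2, h5]; ring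
  rw [hc h5, hd] at hre
  have := ZZ_rel z
  rw [h5] at this
  have : (ee z.1).re = 0 := by linarith
  simp_all

/-! the flow -/
def cF (t Z : ℝ) : ℝ := Real.cos (Z * t)
def sF (t Z : ℝ) : ℝ := t * Real.sinc (Z * t)
def dF (t Z : ℝ) : ℝ := Z * Real.sin (Z * t)

lemma mul_sF (t Z : ℝ) : Z * sF t Z = Real.sin (Z * t) := by
  unfold sF
  by_cases h : Z * t = 0
  · rw [h]; simp only [Real.sinc_zero, Real.sin_zero]; linarith
  · rw [Real.sinc_of_ne_zero h, ← mul_assoc, mul_div_cancel₀ _ h]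

lemma Good_F (t Z : ℝ) : Good (cF t Z) (sF t Z) (dF t Z) Z := by
  constructor
  · unfold cF dF
    rw [← Real.cos_sq_add_sin_sq (Z * t)]
    linear_combination (Real.sin (Z * t)) * mul_sF t Z
  · unfold dF
    linear_combination (-Z) * mul_sF t Z

lemma sF_add (t t' Z : ℝ) : sF (t' + t) Z = sF t Z * cF t' Z + cF t Z * sF t' Z := by
  by_cases h : Z = 0
  · subst h; simp [sF, cF]; ring
  · apply mul_left_cancel₀ h
    have h1 := mul_sF t Z
    have h2 := mul_sF t' Z
    have h3 := mul_sF (t' + t) Z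
    rw [h3, mul_add Z t' t, Real.sin_add]
    unfold cF
    linear_combination (-Real.cos (Z * t')) * h1 - Real.cos (Z * t) * h2

lemma cF_add (t t' Z : ℝ) : cF (t' + t) Z = cF t Z * cF t' Z - sF t' Z * dF t Z := by
  have h2 := mul_sF t' Z
  unfold cF dF
  rw [mul_add Z t' t, Real.cos_add]
  linear_combination Real.sin (Z * t) * h2

lemma dF_add (t t' Z : ℝ) : dF (t' + t) Z = dF t Z * cF t' Z + cF t Z * dF t' Z := by
  unfold cF dF
  rw [mul_add Z t' t, Real.sin_add]
  ring

def FF (t : ℝ) (z : Ann) : Ann := Gf (cF t (ZZ z)) (sF t (ZZ z)) (dF t (ZZ z)) z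
def DD (t : ℝ) (z : Ann) : ℝ := Df (cF t (ZZ z)) (sF t (ZZ z)) (dF t (ZZ z)) z
def WW (t : ℝ) (z : Ann) : ℝ := Wf (cF t (ZZ z)) (sF t (ZZ z)) z

lemma FF_eq (t : ℝ) (z : Ann) : FF t z = (z.1 + ((DD t z : ℝ) : T1), WW t z) := rfl

lemma ZZ_FF (t : ℝ) (z : Ann) : ZZ (FF t z) = ZZ z := ZZ_Gf (Good_F _ _)

lemma FF_add (t t' : ℝ) (z : Ann) : FF (t' + t) z = FF t' (FF t z) := by
  conv_rhs => rw [FF, ZZ_FF]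
  unfold FF
  rw [Gf_comp (Good_F _ _) (Good_F _ _), ← sF_add, ← cF_add, ← dF_add]

lemma DD_zero (z : Ann) : DD 0 z = 0 := by
  have : Ef (cF 0 (ZZ z)) (sF 0 (ZZ z)) (dF 0 (ZZ z)) z = ee z.1 := by
    apply Complex.ext
    · simp [Ef, cF, dF]
    · simp [Ef, cF, sF, Wf, ZZ_mul]
  unfold DD Df
  rw [this, Complex.mul_conj, ← Complex.sq_norm, norm_ee]
  simp

lemma WW_zero (z : Ann) : WW 0 z = z.2 := by
  simp [WW, Wf, cF, sF]

lemma FF_zero (z : Ann) : FF 0 z = z := by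
  rw [FF_eq, DD_zero, WW_zero]; simp

lemma continuous_WW : Continuous (fun q : ℝ × Ann => WW q.1 q.2) := by
  unfold WW Wf cF sF
  have := Real.continuous_sinc
  have h1 : Continuous (fun q : ℝ × Ann => (ee q.2.1).re) :=
    Complex.continuous_re.comp (continuous_ee.comp (continuous_fst.comp continuous_snd))
  fun_prop

def EE (t : ℝ) (z : Ann) : ℂ := Ef (cF t (ZZ z)) (sF t (ZZ z)) (dF t (ZZ z)) z

lemma continuous_EE : Continuous (fun q : ℝ × Ann => EE q.1 q.2) := by
  have h1 : Continuous (fun q : ℝ × Ann => (ee q.2.1).re) :=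
    Complex.continuous_re.comp (continuous_ee.comp (continuous_fst.comp continuous_snd))
  have h2 := continuous_WW
  have : (fun q : ℝ × Ann => EE q.1 q.2) = fun q : ℝ × Ann =>
      (((ee q.2.1).re * Real.cos (ZZ q.2 * q.1) - q.2.2 * (ZZ q.2 * Real.sin (ZZ q.2 * q.1)) : ℝ) : ℂ)
      + ((ZZ q.2 * Real.sqrt (1 + (WW q.1 q.2) ^ 2) : ℝ) : ℂ) * Complex.I := by
    funext q
    apply Complex.ext
    · rw [Complex.add_re, Complex.ofReal_re, Complex.re_ofReal_mul, Complex.I_re]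
      simp [EE, Ef, cF, dF]
    · rw [Complex.add_im, Complex.ofReal_im, Complex.im_ofReal_mul, Complex.I_im]
      simp [EE, Ef, WW]
  rw [this]
  fun_prop

lemma continuous_DD : Continuous (fun q : ℝ × Ann => DD q.1 q.2) := by
  have h : Continuous (fun q : ℝ × Ann => EE q.1 q.2 * (starRingEnd ℂ) (ee q.2.1)) := by
    have := continuous_EE
    have h2 : Continuous (fun q : ℝ × Ann => (starRingEnd ℂ) (ee q.2.1)) :=
      Complex.continuous_conj.comp (by fun_prop)
    exact this.mul h2
  have h3 : Continuous (fun q : ℝ × Ann => Complex.arg (EE q.1 q.2 * (starRingEnd ℂ) (ee q.2.1))) := by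
    rw [continuous_iff_continuousAt]
    intro q
    apply ContinuousAt.comp (g := Complex.arg) _ h.continuousAt
    apply Complex.continuousAt_arg
    apply slit (Good_F _ _)
    intro h; simp [cF, h]
  exact h3.div_const _

lemma coe_continuous : Continuous (fun x : ℝ => (x : T1)) := AddCircle.continuous_mk' 1

lemma continuous_FF : Continuous (fun q : ℝ × Ann => FF q.1 q.2) := by
  have h1 := continuous_WW
  have h2 := coe_continuous.comp continuous_DD
  have h3 : Continuous (fun q : ℝ × Ann => q.2.1 + ((DD q.1 q.2 : ℝ) : T1)) :=
    Continuous.add (by fun_prop) h2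
  exact h3.prodMk h1

lemma continuous_FF_t (t : ℝ) : Continuous (FF t) := by
  have h : Continuous fun z : Ann => (t, z) := by fun_prop
  have h2 := continuous_FF.comp' h
  exact h2

def FFh (t : ℝ) : Ann ≃ₜ Ann where
  toFun := FF t
  invFun := FF (-t)
  left_inv z := by rw [← FF_add]; simp [FF_zero]
  right_inv z := by rw [← FF_add]; simp [FF_zero]
  continuous_toFun := continuous_FF_t _
  continuous_invFun := continuous_FF_t _

lemma abs_DD_le (t : ℝ) (z : Ann) : |DD t z| ≤ 1 / 2 := by
  have hp := Real.pi_pos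
  unfold DD Df
  rw [abs_div, abs_of_pos (by positivity : 0 < 2 * Real.pi), div_le_iff₀ (by positivity)]
  have := Complex.abs_arg_le_pi (Ef (cF t (ZZ z)) (sF t (ZZ z)) (dF t (ZZ z)) z * (starRingEnd ℂ) (ee z.1))
  linarith

lemma DD_cocycle (t t' : ℝ) (z : Ann) : DD (t' + t) z = DD t' (FF t z) + DD t z := by
  let φ : ℝ → ℝ := fun r => DD (r + t) z - DD r (FF t z) - DD t z
  have hφ : Continuous φ := by
    have h1 : Continuous fun r : ℝ => DD (r + t) z := by
      have h := continuous_DD.comp' (by fun_prop : Continuous fun r : ℝ => (r + t, z))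
      exact h
    have h2 : Continuous fun r : ℝ => DD r (FF t z) := by
      have h := continuous_DD.comp' (by fun_prop : Continuous fun r : ℝ => (r, FF t z))
      exact h
    exact (h1.sub h2).sub continuous_const
  have hint : ∀ r, ∃ k : ℤ, φ r = k := by
    intro r
    have h1 := congrArg Prod.fst (FF_add t r z)
    simp only [FF_eq] at h1
    rw [← FF_eq] at h1
    have h2 : ((φ r : ℝ) : T1) = 0 := by
      simp only [φ, AddCircle.coe_sub]
      have : ((DD (r + t) z : ℝ) : T1) = ((DD t z : ℝ) : T1) + ((DD r (FF t z) : ℝ) : T1) := by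
        have := h1
        rw [add_assoc] at this
        exact add_left_cancel this
      rw [this]; abel
    rw [AddCircle.coe_eq_zero_iff] at h2
    obtain ⟨k, hk⟩ := h2
    exact ⟨k, by rw [← hk]; simp⟩
  choose k hk using hint
  have hk0 : φ 0 = 0 := by simp [φ, DD_zero]
  have hkc : Continuous k := by
    have : Topology.IsInducing (fun n : ℤ => (n : ℝ)) := Int.isClosedEmbedding_coe_real.isInducing
    rw [this.continuous_iff]
    have : (fun n : ℤ => (n : ℝ)) ∘ k = φ := by funext r; simp [hk]
    rw [this]; exact hφ
  have := (PreconnectedSpace.constant inferInstance hkc : k t' = k 0)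
  have h5 : φ t' = φ 0 := by rw [hk, hk, this]
  rw [hk0] at h5
  simp only [φ] at h5
  linarith

def Fc (t : ℝ) (z : ℝ × ℝ) : ℝ × ℝ := (z.1 + DD t (pA z), WW t (pA z))

lemma pA_Fc (t : ℝ) (z : ℝ × ℝ) : pA (Fc t z) = FF t (pA z) := by
  rw [FF_eq]
  simp only [pA, Fc, AddCircle.coe_add]

lemma continuous_pA : Continuous pA := by
  unfold pA
  exact (coe_continuous.comp continuous_fst).prodMk continuous_snd

lemma Fc_add (t t' : ℝ) (z : ℝ × ℝ) : Fc (t' + t) z = Fc t' (Fc t z) := by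
  conv_rhs => rw [Fc]
  rw [pA_Fc]
  have h := congrArg Prod.snd (FF_add t t' (pA z))
  apply Prod.ext
  · simp only [Fc]; rw [DD_cocycle]; ring
  · exact h

lemma Fc_zero (z : ℝ × ℝ) : Fc 0 z = z := by
  simp [Fc, DD_zero, WW_zero, pA]

lemma continuous_Fc (t : ℝ) : Continuous (Fc t) := by
  have h0 := continuous_pA
  have h1 : Continuous fun z : ℝ × ℝ => DD t (pA z) := by
    have h := continuous_DD.comp' (by fun_prop : Continuous fun z : ℝ × ℝ => (t, pA z))
    exact h
  have h2 : Continuous fun z : ℝ × ℝ => WW t (pA z) := by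
    have h := continuous_WW.comp' (by fun_prop : Continuous fun z : ℝ × ℝ => (t, pA z))
    exact h
  exact (continuous_fst.add h1).prodMk h2

def Fch (t : ℝ) : (ℝ × ℝ) ≃ₜ (ℝ × ℝ) where
  toFun := Fc t
  invFun := Fc (-t)
  left_inv z := by rw [← Fc_add]; simp [Fc_zero]
  right_inv z := by rw [← Fc_add]; simp [Fc_zero]
  continuous_toFun := continuous_Fc _
  continuous_invFun := continuous_Fc _

/-! fixed points -/
lemma FF_fixed {z : Ann} (h : FF 1 z = z) : z.2 = 0 ∧ (ee z.1).re = 0 := by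
  have h1 := congrArg Prod.snd h
  have h2 := congrArg (fun y : Ann => (ee y.1).re) h
  simp only [FF] at h1 h2
  rw [ee_Gf (Good_F _ _)] at h2
  simp only [Gf, Ef, Wf, cF, sF, dF, mul_one, one_mul] at h1 h2
  have h3 := ZZ_rel z
  generalize hZ : ZZ z = Z at *
  generalize (ee z.1).re = p at *
  generalize z.2 = w at *
  by_cases h0 : Z = 0
  · subst h0
    simp at h1 h3
    subst h1
    norm_num at h3
  · rw [Real.sinc_of_ne_zero h0] at h1
    have hZ1 : Z ^ 2 ≤ 1 := by nlinarith [sq_nonneg p, sq_nonneg w, mul_nonneg (sq_nonneg Z) (sq_nonneg w)]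
    have hcos : Real.cos Z < 1 := by
      by_contra hc
      have hc1 : Real.cos Z = 1 := le_antisymm (Real.cos_le_one _) (not_lt.1 hc)
      have habs : |Z| ≤ 1 := by rw [← sq_le_one_iff_abs_le_one]; exact hZ1
      have hpi := Real.pi_gt_three
      rw [abs_le] at habs
      exact h0 ((Real.cos_eq_one_iff_of_lt_of_lt (by linarith) (by linarith)).1 hc1)
    have e1 : w * Z * (Real.cos Z - 1) + p * Real.sin Z = 0 := by
      field_simp at h1
      linear_combination h1
    have e2 : p * (Real.cos Z - 1) - w * Z * Real.sin Z = 0 := by linear_combination h2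
    have e3 := Real.cos_sq_add_sin_sq Z
    have e4 : (w * Z) * (2 - 2 * Real.cos Z) = 0 := by
      linear_combination (Real.cos Z - 1) * e1 - Real.sin Z * e2 - (w * Z) * e3
    have e5 : p * (2 - 2 * Real.cos Z) = 0 := by
      linear_combination (Real.cos Z - 1) * e2 + Real.sin Z * e1 - p * e3
    have e6 : 2 - 2 * Real.cos Z ≠ 0 := by intro; linarith
    constructor
    · rcases mul_eq_zero.1 e4 with h | h
      · exact (mul_eq_zero.1 h).resolve_right h0
      · exact absurd h e6
    · exact (mul_eq_zero.1 e5).resolve_right e6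

lemma FF_fixed' {z : Ann} (h1 : z.2 = 0) (h2 : (ee z.1).re = 0) (t : ℝ) : FF t z = z := by
  have hW : Wf (cF t (ZZ z)) (sF t (ZZ z)) z = 0 := by simp [Wf, h1, h2]
  apply Ann_ext
  · unfold FF
    rw [ee_Gf (Good_F _ _)]
    apply Complex.ext
    · simp [Ef, h1, h2]
    · simp only [Ef]
      rw [hW, ← ZZ_mul z, h1]
  · rw [h1]; exact hW

/-! the invariant vertical line -/
lemma Fc_line (w t : ℝ) : Fc t (0, w) = (0, w + t) := by
  have hz : pA (0, w) = ((0 : T1), w) := by simp [pA]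
  have hZ : ZZ ((0 : T1), w) = 0 := by simp [ZZ, ee_zero]
  unfold Fc
  rw [hz]
  have : DD t ((0 : T1), w) = 0 := by
    simp [DD, Df, hZ, cF, sF, dF, Ef, ee_zero]
    rw [show (⟨1, 0⟩ : ℂ) = 1 from rfl]; simp
  rw [this]
  simp [WW, Wf, hZ, cF, sF, ee_zero]

/-! ### invariant measure -/
def Psi (q : Ann × T1) : Ann :=
  Gf (ee q.2).re ((ee q.2).im / ZZ q.1) (ZZ q.1 * (ee q.2).im) q.1

lemma Good_Psi {z : Ann} (h : ZZ z ≠ 0) (θ : T1) :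
    Good (ee θ).re ((ee θ).im / ZZ z) (ZZ z * (ee θ).im) (ZZ z) := by
  constructor
  · rw [← ee_sq θ]; field_simp
  · field_simp

lemma FF_Psi {z : Ann} (h : ZZ z ≠ 0) (θ : T1) :
    FF 1 (Psi (z, θ)) = Psi (z, θ + ((ZZ z / (2 * Real.pi) : ℝ) : T1)) := by
  have hg := Good_Psi h θ
  have hp := Real.pi_pos
  have hE : ee (θ + ((ZZ z / (2 * Real.pi) : ℝ) : T1)) =
      ee θ * (Real.cos (ZZ z) + Real.sin (ZZ z) * Complex.I) := by
    rw [ee_add, ee_coe, Complex.exp_mul_I]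
    have : 2 * Real.pi * (ZZ z / (2 * Real.pi)) = ZZ z := by field_simp
    rw [this]; simp
  have hre : (ee (θ + ((ZZ z / (2 * Real.pi) : ℝ) : T1))).re =
      (ee θ).re * Real.cos (ZZ z) - (ee θ).im * Real.sin (ZZ z) := by
    rw [hE, Complex.mul_re, Complex.add_re, Complex.add_im, Complex.re_ofReal_mul,
      Complex.im_ofReal_mul, Complex.ofReal_re, Complex.ofReal_im, Complex.I_re, Complex.I_im]; ring
  have him : (ee (θ + ((ZZ z / (2 * Real.pi) : ℝ) : T1))).im =
      (ee θ).re * Real.sin (ZZ z) + (ee θ).im * Real.cos (ZZ z) := by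
    rw [hE, Complex.mul_im, Complex.add_re, Complex.add_im, Complex.re_ofReal_mul,
      Complex.im_ofReal_mul, Complex.ofReal_re, Complex.ofReal_im, Complex.I_re, Complex.I_im]; ring
  have hZ : ZZ (Psi (z, θ)) = ZZ z := ZZ_Gf hg
  rw [FF, hZ]
  unfold Psi
  simp only
  rw [Gf_comp hg (Good_F _ _), hre, him]
  have hs : sF 1 (ZZ z) = Real.sin (ZZ z) / ZZ z := by
    rw [sF, one_mul, mul_one, Real.sinc_of_ne_zero h]
  simp only [hs, cF, dF, mul_one]
  congr 1 <;> field_simp <;> ring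

lemma measurable_ZZ : Measurable ZZ := continuous_ZZ.measurable

lemma measurable_Psi : Measurable Psi := by
  have h1 : Measurable fun q : Ann × T1 => ee q.2 := (continuous_ee.comp continuous_snd).measurable
  have h2 : Measurable fun q : Ann × T1 => ZZ q.1 := (continuous_ZZ.comp continuous_fst).measurable
  have h3 : Measurable fun q : Ann × T1 => ee q.1.1 :=
    (continuous_ee.comp (continuous_fst.comp continuous_fst)).measurable
  have h1r := Complex.measurable_re.comp h1
  have h1i := Complex.measurable_im.comp h1
  have h3r := Complex.measurable_re.comp h3
  have h4 : Measurable fun q : Ann × T1 => q.1.2 := by fun_prop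
  simp only [Function.comp_def] at h1r h1i h3r
  have hW : Measurable fun q : Ann × T1 => Wf (ee q.2).re ((ee q.2).im / ZZ q.1) q.1 := by
    unfold Wf
    exact (h4.mul h1r).add (h3r.mul (h1i.div h2))
  have hE : Measurable fun q : Ann × T1 =>
      Ef (ee q.2).re ((ee q.2).im / ZZ q.1) (ZZ q.1 * (ee q.2).im) q.1 := by
    have e : (fun q : Ann × T1 =>
      Ef (ee q.2).re ((ee q.2).im / ZZ q.1) (ZZ q.1 * (ee q.2).im) q.1) = fun q : Ann × T1 =>
        (((ee q.1.1).re * (ee q.2).re - q.1.2 * (ZZ q.1 * (ee q.2).im) : ℝ) : ℂ) +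
        ((ZZ q.1 * Real.sqrt (1 + (Wf (ee q.2).re ((ee q.2).im / ZZ q.1) q.1) ^ 2) : ℝ) : ℂ)
          * Complex.I := by
      funext q
      apply Complex.ext
      · rw [Complex.add_re, Complex.ofReal_re, Complex.re_ofReal_mul, Complex.I_re]
        simp [Ef]
      · rw [Complex.add_im, Complex.ofReal_im, Complex.im_ofReal_mul, Complex.I_im]
        simp [Ef]
    rw [e]
    have a1 := (h3r.mul h1r).sub (h4.mul (h2.mul h1i))
    have a3 : Measurable fun q : Ann × T1 =>
        Real.sqrt (1 + (Wf (ee q.2).re ((ee q.2).im / ZZ q.1) q.1) ^ 2) :=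
      ((hW.pow_const 2).const_add 1).sqrt
    have a2 := h2.mul a3
    exact (Complex.measurable_ofReal.comp a1).add ((Complex.measurable_ofReal.comp a2).mul_const _)
  have hc : Measurable fun q : Ann × T1 => (starRingEnd ℂ) (ee q.1.1) :=
    Complex.continuous_conj.measurable.comp h3
  have hD : Measurable fun q : Ann × T1 =>
      Df (ee q.2).re ((ee q.2).im / ZZ q.1) (ZZ q.1 * (ee q.2).im) q.1 :=
    (Complex.measurable_arg.comp (hE.mul hc)).div_const _
  have hx : Measurable fun q : Ann × T1 => q.1.1 := by fun_prop
  exact (hx.add (coe_continuous.measurable.comp hD)).prodMk hW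

lemma continuous_Psi {z : Ann} (h : ZZ z ≠ 0) : Continuous fun θ : T1 => Psi (z, θ) := by
  have hr : Continuous fun θ : T1 => (ee θ).re := Complex.continuous_re.comp continuous_ee
  have hi : Continuous fun θ : T1 => (ee θ).im := Complex.continuous_im.comp continuous_ee
  have hW : Continuous fun θ : T1 => Wf (ee θ).re ((ee θ).im / ZZ z) z := by
    unfold Wf; fun_prop
  have hE : Continuous fun θ : T1 => Ef (ee θ).re ((ee θ).im / ZZ z) (ZZ z * (ee θ).im) z := by
    have e : (fun θ : T1 => Ef (ee θ).re ((ee θ).im / ZZ z) (ZZ z * (ee θ).im) z) = fun θ : T1 =>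
        (((ee z.1).re * (ee θ).re - z.2 * (ZZ z * (ee θ).im) : ℝ) : ℂ) +
        ((ZZ z * Real.sqrt (1 + (Wf (ee θ).re ((ee θ).im / ZZ z) z) ^ 2) : ℝ) : ℂ)
          * Complex.I := by
      funext q
      apply Complex.ext
      · rw [Complex.add_re, Complex.ofReal_re, Complex.re_ofReal_mul, Complex.I_re]
        simp [Ef]
      · rw [Complex.add_im, Complex.ofReal_im, Complex.im_ofReal_mul, Complex.I_im]
        simp [Ef]
    rw [e]
    fun_prop
  have hA : Continuous fun θ : T1 => Complex.arg
      (Ef (ee θ).re ((ee θ).im / ZZ z) (ZZ z * (ee θ).im) z * (starRingEnd ℂ) (ee z.1)) := by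
    rw [continuous_iff_continuousAt]
    intro θ
    apply ContinuousAt.comp (g := Complex.arg) _ (hE.mul_const _).continuousAt
    exact Complex.continuousAt_arg (slit (Good_Psi h θ) (fun h' => absurd h' h))
  have hD : Continuous fun θ : T1 => Df (ee θ).re ((ee θ).im / ZZ z) (ZZ z * (ee θ).im) z :=
    hA.div_const _
  have hx : Continuous fun θ : T1 => z.1 +
      ((Df (ee θ).re ((ee θ).im / ZZ z) (ZZ z * (ee θ).im) z : ℝ) : T1) :=
    continuous_const.add (coe_continuous.comp hD)
  exact hx.prodMk hW

lemma Psi_zero (z : Ann) : Psi (z, 0) = z := by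
  have h0 := FF_zero z
  unfold Psi
  simp only [ee_zero]
  unfold FF at h0
  simpa [cF, sF, dF] using h0

lemma exists_ZZ_ne {U : Set Ann} (hU : IsOpen U) (hne : U.Nonempty) :
    (U ∩ {z | ZZ z ≠ 0}).Nonempty := by
  obtain ⟨⟨x, w⟩, hz⟩ := hne
  obtain ⟨u, rfl⟩ := QuotientAddGroup.mk_surjective x
  have hV : IsOpen ((fun r : ℝ => pA (r, w)) ⁻¹' U) :=
    hU.preimage (continuous_pA.comp' (by fun_prop : Continuous fun r : ℝ => (r, w)))
  have hc : (range fun n : ℤ => (n : ℝ) / 2).Countable := countable_range _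
  obtain ⟨r, hr, hr'⟩ := (hc.dense_compl ℝ).inter_open_nonempty _ hV ⟨u, hz⟩
  refine ⟨pA (r, w), hr, ?_⟩
  have him : (ee (r : T1)).im ≠ 0 := by
    rw [ee_coe, Complex.exp_ofReal_mul_I_im]
    intro h
    rw [Real.sin_eq_zero_iff] at h
    obtain ⟨n, hn⟩ := h
    apply hr'
    refine ⟨n, ?_⟩
    have hp := Real.pi_pos
    have : (n : ℝ) = 2 * r := by
      apply mul_right_cancel₀ hp.ne'
      linarith
    simp only [this]; ring
  change ZZ (pA (r, w)) ≠ 0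
  exact div_ne_zero him (sq1_pos _).ne'

lemma exists_measure : ∃ μ : Measure Ann, InvariantFullMeasure (FFh 1) μ := by
  let S : Set Ann := {z | ZZ z ≠ 0}
  have hSo : IsOpen S := isOpen_ne_fun continuous_ZZ continuous_const
  let m0 : Measure Ann := (volume : Measure Ann).restrict S
  have hm0 : ∀ U : Set Ann, IsOpen U → U.Nonempty → m0 U ≠ 0 := by
    intro U hU hne
    rw [Measure.restrict_apply hU.measurableSet]
    exact (hU.inter hSo).measure_ne_zero _ (exists_ZZ_ne hU hne)
  have : NeZero m0 := ⟨fun h => hm0 univ isOpen_univ ⟨(0, 0), trivial⟩ (by rw [h]; rfl)⟩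
  let m : Measure Ann := m0.toFinite
  let h : Measure T1 := AddCircle.haarAddCircle
  let ν : Measure (Ann × T1) := m.prod h
  have hae : ∀ᵐ z ∂m, ZZ z ≠ 0 := by
    have : ∀ᵐ z ∂m0, ZZ z ≠ 0 := ae_restrict_mem hSo.measurableSet
    exact (toFinite_absolutelyContinuous m0).ae_le this
  let Sk : Ann × T1 → Ann × T1 := fun q => (q.1, q.2 + ((ZZ q.1 / (2 * Real.pi) : ℝ) : T1))
  have hSk : MeasurePreserving Sk ν ν := by
    refine MeasurePreserving.skew_product (f := id)
      (g := fun z θ => θ + ((ZZ z / (2 * Real.pi) : ℝ) : T1)) (MeasurePreserving.id m) ?_ ?_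
    · have h1 : Continuous fun q : Ann × T1 => q.2 + ((ZZ q.1 / (2 * Real.pi) : ℝ) : T1) := by
        have : Continuous fun q : Ann × T1 => ZZ q.1 / (2 * Real.pi) := by fun_prop
        have h2 := coe_continuous.comp' this
        exact continuous_snd.add h2
      exact h1.measurable
    · exact Eventually.of_forall fun z => map_add_right_eq_self h _
  refine ⟨Measure.map Psi ν, Measure.isProbabilityMeasure_map measurable_Psi.aemeasurable, ?_, ?_⟩
  · have hF : Measurable (FFh 1) := (FFh 1).continuous.measurable
    rw [Measure.map_map hF measurable_Psi]
    have h1 : ((FFh 1) ∘ Psi) =ᵐ[ν] (Psi ∘ Sk) := by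
      have : ∀ᵐ q ∂ν, ZZ q.1 ≠ 0 := Measure.quasiMeasurePreserving_fst.ae hae
      filter_upwards [this] with q hq
      exact FF_Psi hq q.2
    rw [Measure.map_congr h1, ← Measure.map_map measurable_Psi hSk.measurable, hSk.map_eq]
  · intro U hU hne
    rw [Measure.map_apply measurable_Psi hU.measurableSet, pos_iff_ne_zero]
    intro h0
    rw [Measure.measure_prod_null (measurable_Psi hU.measurableSet)] at h0
    have h1 : ∀ᵐ z ∂m, z ∉ U := by
      filter_upwards [h0, hae] with z hz hZ hzU
      have hop : IsOpen (Prod.mk z ⁻¹' (Psi ⁻¹' U)) := hU.preimage (continuous_Psi hZ)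
      exact hop.measure_ne_zero h ⟨0, by simpa [Psi_zero] using hzU⟩ hz
    have h2 : m U = 0 := by
      rw [ae_iff] at h1
      simpa using h1
    exact hm0 U hU hne (toFinite_apply_eq_zero_iff.1 h2)

/-! ### estimates -/
lemma abs_ZZ_le_one (z : Ann) : |ZZ z| ≤ 1 := by
  rw [← sq_le_one_iff_abs_le_one]
  nlinarith [ZZ_rel z, sq_nonneg (ee z.1).re, mul_nonneg (sq_nonneg (ZZ z)) (sq_nonneg z.2)]

lemma abs_mul_ZZ_le (z : Ann) : |z.2 * ZZ z| ≤ 1 := by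
  rw [← sq_le_one_iff_abs_le_one]
  nlinarith [ZZ_rel z, sq_nonneg (ee z.1).re, sq_nonneg (ZZ z)]

lemma abs_re_le (z : Ann) : |(ee z.1).re| ≤ 1 := by
  rw [← sq_le_one_iff_abs_le_one]
  nlinarith [ee_sq z.1, sq_nonneg (ee z.1).im]

lemma abs_cos_sub_one (Z : ℝ) : |Real.cos Z - 1| ≤ |Z| ^ 2 / 2 := by
  rw [abs_le, sq_abs]
  constructor
  · linarith [Real.one_sub_sq_div_two_le_cos (x := Z)]
  · linarith [Real.cos_le_one Z, sq_nonneg Z]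

lemma WW_bound (z : Ann) : |WW 1 z - z.2| ≤ 2 := by
  have e : WW 1 z - z.2 = z.2 * (Real.cos (ZZ z) - 1) + (ee z.1).re * Real.sinc (ZZ z) := by
    simp only [WW, Wf, cF, sF, mul_one, one_mul]; ring
  rw [e]
  have h1 := abs_cos_sub_one (ZZ z)
  have h2 := abs_mul_ZZ_le z
  have h3 := abs_ZZ_le_one z
  rw [abs_mul] at h2
  have h4 : |z.2 * (Real.cos (ZZ z) - 1)| ≤ 1 := by
    rw [abs_mul]
    calc |z.2| * |Real.cos (ZZ z) - 1| ≤ |z.2| * (|ZZ z| ^ 2 / 2) := by gcongr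
      _ = (|z.2| * |ZZ z|) * |ZZ z| / 2 := by ring
      _ ≤ 1 * 1 / 2 := by gcongr
      _ ≤ 1 := by norm_num
  have h5 : |(ee z.1).re * Real.sinc (ZZ z)| ≤ 1 := by
    rw [abs_mul]
    exact mul_le_one₀ (abs_re_le z) (abs_nonneg _) (Real.abs_sinc_le_one _)
  exact (abs_add_le _ _).trans (by linarith)

lemma sq1_lip (a b : ℝ) : |Real.sqrt (1 + a ^ 2) - Real.sqrt (1 + b ^ 2)| ≤ |a - b| := by
  have ha := sq1_sq a
  have hb := sq1_sq b
  have hA := sq1_pos a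
  have hB := sq1_pos b
  generalize Real.sqrt (1 + a ^ 2) = A at *
  generalize Real.sqrt (1 + b ^ 2) = B at *
  apply sq_le_sq.1
  have h2 : (1 + a * b) ≤ A * B := by
    apply le_of_sq_le_sq _ (by positivity)
    rw [mul_pow, ha, hb]
    nlinarith [sq_nonneg (a - b)]
  nlinarith

lemma EE_bound (z : Ann) : ‖EE 1 z - ee z.1‖ ≤ 4 * |ZZ z| := by
  have h1 := abs_cos_sub_one (ZZ z)
  have h2 := abs_mul_ZZ_le z
  have h3 := abs_ZZ_le_one z
  have h4 := abs_re_le z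
  have h5 := WW_bound z
  have h0 := abs_nonneg (ZZ z)
  have hs : |Real.sin (ZZ z)| ≤ |ZZ z| := Real.abs_sin_le_abs
  refine (Complex.norm_le_abs_re_add_abs_im _).trans ?_
  have hre : |(EE 1 z - ee z.1).re| ≤ 2 * |ZZ z| := by
    have e : (EE 1 z - ee z.1).re = (ee z.1).re * (Real.cos (ZZ z) - 1)
        - (z.2 * ZZ z) * Real.sin (ZZ z) := by
      simp only [EE, Ef, cF, dF, Complex.sub_re, mul_one]; ring
    rw [e]
    refine (abs_sub _ _).trans ?_
    rw [abs_mul, abs_mul (z.2 * ZZ z)]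
    have a1 : |(ee z.1).re| * |Real.cos (ZZ z) - 1| ≤ 1 * (|ZZ z| ^ 2 / 2) := by gcongr
    have a2 : |z.2 * ZZ z| * |Real.sin (ZZ z)| ≤ 1 * |ZZ z| := by gcongr
    nlinarith
  have him : |(EE 1 z - ee z.1).im| ≤ 2 * |ZZ z| := by
    have e : (EE 1 z - ee z.1).im = ZZ z * (Real.sqrt (1 + (WW 1 z) ^ 2) - Real.sqrt (1 + z.2 ^ 2)) := by
      rw [mul_sub, ZZ_mul]
      simp only [EE, Ef, Complex.sub_im, WW]
    rw [e, abs_mul]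
    have := (sq1_lip (WW 1 z) z.2).trans h5
    nlinarith
  linarith

lemma DD_small (ε : ℝ) (hε : 0 < ε) : ∃ R : ℝ, ∀ z : Ann, R ≤ z.2 → |DD 1 z| < ε := by
  have hc : ContinuousAt (fun ζ : ℂ => Complex.arg ζ / (2 * Real.pi)) 1 :=
    (Complex.continuousAt_arg (by simp)).div_const _
  rw [Metric.continuousAt_iff] at hc
  obtain ⟨δ, hδ, h⟩ := hc ε hε
  refine ⟨max 1 (8 / δ), fun z hz => ?_⟩
  have hz1 : 1 ≤ z.2 := (le_max_left _ _).trans hz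
  have hz2 : 8 / δ ≤ z.2 := (le_max_right _ _).trans hz
  have h2 := abs_mul_ZZ_le z
  rw [abs_mul, abs_of_pos (by linarith)] at h2
  have h3 : 4 * |ZZ z| < δ := by
    rw [div_le_iff₀ hδ] at hz2
    by_contra hcon
    push Not at hcon
    nlinarith
  have h4 : dist (EE 1 z * (starRingEnd ℂ) (ee z.1)) 1 < δ := by
    have h5 : ee z.1 * (starRingEnd ℂ) (ee z.1) = 1 := by
      rw [Complex.mul_conj, ← Complex.sq_norm, norm_ee]; simp
    rw [dist_eq_norm]
    conv_lhs => rw [← h5]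
    rw [← sub_mul, norm_mul, Complex.norm_conj, norm_ee, mul_one]
    exact (EE_bound z).trans_lt h3
  have h6 := h h4
  rw [Real.dist_eq] at h6
  simp only [Complex.arg_one, zero_div, sub_zero] at h6
  exact h6

/-! ### conjugacy -/
def kap (y : ℝ) : ℝ := (4 : ℝ) ^ y + 2 * y - 1
def sig (y : ℝ) : ℝ := (y - 1 / 2) * ((1 - Real.cos (2 * Real.pi * y)) / 2)

lemma continuous_sig : Continuous sig := by unfold sig; fun_prop

lemma continuous_kap : Continuous kap := by
  have : Continuous fun y : ℝ => (4 : ℝ) ^ y := Real.continuous_const_rpow (by norm_num)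
  unfold kap; fun_prop

lemma strictMono_kap : StrictMono kap := by
  intro a b h
  have : (4 : ℝ) ^ a < 4 ^ b := Real.rpow_lt_rpow_of_exponent_lt (by norm_num) h
  unfold kap; linarith

lemma surjective_kap : Function.Surjective kap := by
  apply continuous_kap.surjective
  · apply tendsto_atTop_mono (f := fun y => 2 * y - 1)
    · intro y
      have : (0 : ℝ) < 4 ^ y := by positivity
      unfold kap; linarith
    · exact tendsto_atTop_add_const_right _ _ (tendsto_id.const_mul_atTop (by norm_num))
  · have : ∀ᶠ y : ℝ in atBot, kap y ≤ 2 * y := by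
      filter_upwards [eventually_le_atBot 0] with y hy
      have : (4 : ℝ) ^ y ≤ 1 := Real.rpow_le_one_of_one_le_of_nonpos (by norm_num) hy
      unfold kap; linarith
    exact tendsto_atBot_mono' _ this (tendsto_id.const_mul_atBot (by norm_num))

def kaph : ℝ ≃ₜ ℝ := (strictMono_kap.orderIsoOfSurjective kap surjective_kap).toHomeomorph

lemma kaph_apply (y : ℝ) : kaph y = kap y := rfl

lemma kap_zero : kap 0 = 0 := by simp [kap]

lemma kap_symm (w : ℝ) : kap (kaph.symm w) = w := kaph.apply_symm_apply w

lemma exp_le_four (a : ℝ) (ha : 0 ≤ a) : Real.exp a ≤ 4 ^ a := by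
  rw [Real.rpow_def_of_pos (by norm_num), Real.exp_le_exp]
  have : 1 ≤ Real.log 4 := by
    rw [Real.le_log_iff_exp_le (by norm_num)]
    linarith [Real.exp_one_lt_d9]
  nlinarith

lemma four_diff {a b : ℝ} (h : a ≤ b) : (4 : ℝ) ^ a * (b - a) ≤ 4 ^ b - 4 ^ a := by
  have h1 : (4 : ℝ) ^ b = 4 ^ a * 4 ^ (b - a) := by
    rw [← Real.rpow_add (by norm_num)]; congr 1; ring
  have h2 := exp_le_four (b - a) (by linarith)
  have h3 := Real.add_one_le_exp (b - a)
  have h4 : (0 : ℝ) < 4 ^ a := by positivity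
  rw [h1]
  nlinarith

lemma kap_close {a b : ℝ} (h : |kap b - kap a| ≤ 2) : |b - a| * 4 ^ a ≤ 8 := by
  rw [abs_le] at h
  unfold kap at h
  have h4 : (0 : ℝ) < 4 ^ a := by positivity
  rcases le_total a b with hab | hab
  · have := four_diff hab
    rw [abs_of_nonneg (by linarith)]
    nlinarith
  · have h1 := four_diff hab
    rw [abs_of_nonpos (by linarith)]
    have h5 : (0 : ℝ) < 4 ^ b := by positivity
    have h2 : a - b ≤ 1 := by nlinarith
    have h3 : (4 : ℝ) ^ a ≤ 4 * 4 ^ b := by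
      have : (4 : ℝ) * 4 ^ b = 4 ^ (b + 1) := by
        rw [Real.rpow_add (by norm_num), Real.rpow_one]; ring
      rw [this]
      exact Real.rpow_le_rpow_of_exponent_le (by norm_num) (by linarith)
    nlinarith

lemma sig_diff (a b : ℝ) : |sig b - sig a| ≤ (1 + 4 * |a - 1 / 2|) * |b - a| := by
  have e : sig b - sig a = (b - a) * ((1 - Real.cos (2 * Real.pi * b)) / 2)
      + (a - 1 / 2) * ((Real.cos (2 * Real.pi * a) - Real.cos (2 * Real.pi * b)) / 2) := by
    unfold sig; ring
  rw [e]
  refine (abs_add_le _ _).trans ?_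
  rw [abs_mul, abs_mul]
  have h1 : |(1 - Real.cos (2 * Real.pi * b)) / 2| ≤ 1 := by
    rw [abs_le]
    constructor <;> linarith [Real.cos_le_one (2 * Real.pi * b), Real.neg_one_le_cos (2 * Real.pi * b)]
  have h2 : |(Real.cos (2 * Real.pi * a) - Real.cos (2 * Real.pi * b)) / 2| ≤ 4 * |b - a| := by
    have := Real.abs_cos_sub_cos_le (2 * Real.pi * a) (2 * Real.pi * b)
    rw [← mul_sub, abs_mul, abs_of_pos (by positivity : 0 < 2 * Real.pi), abs_sub_comm a b] at this
    rw [abs_div, abs_of_pos (by norm_num : (0 : ℝ) < 2)]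
    nlinarith [Real.pi_le_four, abs_nonneg (b - a)]
  have h3 := abs_nonneg (b - a)
  have h4 := abs_nonneg (a - 1 / 2)
  nlinarith

lemma sig_small (ε : ℝ) (hε : 0 < ε) :
    ∃ Y : ℝ, ∀ a b : ℝ, Y ≤ a → |kap b - kap a| ≤ 2 → |sig b - sig a| < ε := by
  refine ⟨max 1 (100 / ε), fun a b ha h => ?_⟩
  have h1 : 1 ≤ a := (le_max_left _ _).trans ha
  have h2 : 100 / ε ≤ a := (le_max_right _ _).trans ha
  rw [div_le_iff₀ hε] at h2
  have h3 := kap_close h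
  have h4 := sig_diff a b
  rw [abs_of_nonneg (by linarith : 0 ≤ a - 1 / 2)] at h4
  have h5 := exp_le_four a (by linarith)
  have h6 := Real.quadratic_le_exp_of_nonneg (by linarith : 0 ≤ a)
  have h7 : a ^ 2 / 2 ≤ (4 : ℝ) ^ a := by linarith
  have h8 := abs_nonneg (b - a)
  have h9 : |b - a| * a ^ 2 ≤ 16 := by nlinarith
  have h10 : |sig b - sig a| ≤ 5 * a * |b - a| := by nlinarith
  have h11 : |sig b - sig a| * a ≤ 80 := by
    calc |sig b - sig a| * a ≤ 5 * a * |b - a| * a := by gcongr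
      _ = 5 * (|b - a| * a ^ 2) := by ring
      _ ≤ 80 := by linarith
  by_contra hcon
  push Not at hcon
  nlinarith

def Kh : Ann ≃ₜ Ann where
  toFun z := (z.1 - ((sig z.2 : ℝ) : T1), kaph z.2)
  invFun z := (z.1 + ((sig (kaph.symm z.2) : ℝ) : T1), kaph.symm z.2)
  left_inv z := by simp
  right_inv z := by simp
  continuous_toFun := by
    have h1 : Continuous fun z : Ann => ((sig z.2 : ℝ) : T1) :=
      coe_continuous.comp' (continuous_sig.comp' continuous_snd)
    exact (continuous_fst.sub h1).prodMk (kaph.continuous.comp' continuous_snd)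
  continuous_invFun := by
    have h0 := kaph.symm.continuous.comp' (continuous_snd : Continuous (Prod.snd : Ann → ℝ))
    have h1 : Continuous fun z : Ann => ((sig (kaph.symm z.2) : ℝ) : T1) :=
      coe_continuous.comp' (continuous_sig.comp' h0)
    exact (continuous_fst.add h1).prodMk h0

def Kch : (ℝ × ℝ) ≃ₜ (ℝ × ℝ) where
  toFun z := (z.1 - sig z.2, kaph z.2)
  invFun z := (z.1 + sig (kaph.symm z.2), kaph.symm z.2)
  left_inv z := by simp
  right_inv z := by simp
  continuous_toFun := by
    exact (continuous_fst.sub (continuous_sig.comp' continuous_snd)).prodMk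
      (kaph.continuous.comp' continuous_snd)
  continuous_invFun := by
    have h0 := kaph.symm.continuous.comp' (continuous_snd : Continuous (Prod.snd : ℝ × ℝ → ℝ))
    exact (continuous_fst.add (continuous_sig.comp' h0)).prodMk h0

lemma pA_Kch (z : ℝ × ℝ) : pA (Kch z) = Kh (pA z) := by
  simp [pA, Kch, Kh]

lemma pA_Kch_symm (z : ℝ × ℝ) : pA (Kch.symm z) = Kh.symm (pA z) := by
  rw [Homeomorph.eq_symm_apply, ← pA_Kch, Homeomorph.apply_symm_apply]

def fA : Ann ≃ₜ Ann := (Kh.trans (FFh 1)).trans Kh.symm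
def fC : (ℝ × ℝ) ≃ₜ (ℝ × ℝ) := (Kch.trans (Fch 1)).trans Kch.symm

lemma fA_apply (z : Ann) : fA z = Kh.symm (FF 1 (Kh z)) := rfl
lemma fC_apply (z : ℝ × ℝ) : fC z = Kch.symm (Fc 1 (Kch z)) := rfl

lemma fC_iter (n : ℕ) (z : ℝ × ℝ) : (⇑fC)^[n] z = Kch.symm (Fc n (Kch z)) := by
  induction n with
  | zero => simp [Fc_zero]
  | succ n ih =>
    rw [Function.iterate_succ_apply', ih, fC_apply, Homeomorph.apply_symm_apply, ← Fc_add]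
    push_cast
    rw [add_comm]

lemma isLift_f : IsLift fA fC := by
  intro z
  rw [fC_apply, pA_Kch_symm, pA_Fc, pA_Kch, fA_apply]

lemma isotopic_f : IsotopicToId fA := by
  refine ⟨fun q => Kh.symm (FF q.1 (Kh q.2)), ?_, ?_, ?_, ?_⟩
  · apply Continuous.continuousOn
    have h1 : Continuous fun q : ℝ × Ann => (q.1, Kh q.2) :=
      continuous_fst.prodMk (Kh.continuous.comp' continuous_snd)
    have h2 := continuous_FF.comp' h1
    have h3 := Kh.symm.continuous.comp' h2
    exact h3
  · intro z; simp [FF_zero]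
  · intro z; rfl
  · intro t _
    exact ⟨(Kh.trans (FFh t)).trans Kh.symm, fun z => rfl⟩

lemma measure_f : ∃ μ : Measure Ann, InvariantFullMeasure fA μ := by
  obtain ⟨μ, h1, h2, h3⟩ := exists_measure
  have hK : Measurable Kh.symm := Kh.symm.continuous.measurable
  have hK' : Measurable Kh := Kh.continuous.measurable
  have hF : Measurable (FFh 1) := (FFh 1).continuous.measurable
  have hA : Measurable fA := fA.continuous.measurable
  refine ⟨Measure.map Kh.symm μ, Measure.isProbabilityMeasure_map hK.aemeasurable, ?_, ?_⟩
  · rw [Measure.map_map hA hK]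
    have : (fA ∘ Kh.symm) = Kh.symm ∘ (FFh 1) := by
      funext z
      simp only [Function.comp, fA_apply, Homeomorph.apply_symm_apply]
      rfl
    rw [this, ← Measure.map_map hK hF, h2]
  · intro U hU hne
    rw [Measure.map_apply hK hU.measurableSet]
    apply h3 _ (hU.preimage Kh.symm.continuous)
    obtain ⟨u, hu⟩ := hne
    exact ⟨Kh u, by simpa using hu⟩

lemma disp_f (n : ℕ) (z : ℝ × ℝ) : ((⇑fC)^[n] z).1 - z.1 =
    DD n (pA (Kch z)) + sig ((⇑fC)^[n] z).2 - sig z.2 := by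
  rw [fC_iter]
  change ((z.1 - sig z.2) + DD n (pA (Kch z))) + sig (kaph.symm (Fc n (Kch z)).2) - z.1 =
    DD n (pA (Kch z)) + sig (kaph.symm (Fc n (Kch z)).2) - sig z.2
  ring

lemma fixed_f {z : Ann} (h : fA z = z) : z.2 = 0 ∧ (ee z.1).re = 0 := by
  rw [fA_apply, Homeomorph.symm_apply_eq] at h
  obtain ⟨h1, h2⟩ := FF_fixed h
  have h3 : kap z.2 = kap 0 := by rw [kap_zero]; exact h1
  have h4 := strictMono_kap.injective h3
  refine ⟨h4, ?_⟩
  have h5 : (Kh z).1 = z.1 := by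
    change z.1 - ((sig z.2 : ℝ) : T1) = z.1
    rw [h4]; simp [sig]
  rwa [h5] at h2

lemma disk_f : ∃ U : Set Ann, IsOpenTopDisk U ∧ pA '' Function.fixedPoints fC ⊆ U := by
  have hsub : ∀ z ∈ pA '' Function.fixedPoints fC, z ∈ (({((0 : ℝ) : T1)}ᶜ : Set T1) ×ˢ (univ : Set ℝ)) := by
    rintro _ ⟨z, hz, rfl⟩
    have h1 : fA (pA z) = pA z := by rw [← isLift_f z]; rw [hz]
    obtain ⟨_, h2⟩ := fixed_f h1
    refine ⟨fun h => ?_, trivial⟩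
    have h' : (pA z).1 = 0 := by simpa using h
    rw [h', ee_zero] at h2
    simp at h2
  let e := AddCircle.openPartialHomeomorphCoe (1 : ℝ) 0
  have hc1 : ContractibleSpace (Ioo (0 : ℝ) (0 + 1)) :=
    (convex_Ioo _ _).contractibleSpace ⟨1 / 2, by norm_num⟩
  have e1 : (Ioo (0 : ℝ) (0 + 1)) ≃ₜ ({((0 : ℝ) : T1)}ᶜ : Set T1) := e.toHomeomorphSourceTarget
  have hc2 : ContractibleSpace (({((0 : ℝ) : T1)}ᶜ : Set T1) × (univ : Set ℝ)) := by
    have e2 := (e1.prodCongr (Homeomorph.Set.univ ℝ).symm)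
    have : ContractibleSpace ((Ioo (0 : ℝ) (0 + 1)) × ℝ) := inferInstance
    exact e2.symm.contractibleSpace
  have hc3 : ContractibleSpace (({((0 : ℝ) : T1)}ᶜ : Set T1) ×ˢ (univ : Set ℝ) : Set Ann) :=
    (Homeomorph.Set.prod _ _).contractibleSpace
  refine ⟨({((0 : ℝ) : T1)}ᶜ : Set T1) ×ˢ (univ : Set ℝ), ⟨?_, ?_, ?_⟩, hsub⟩
  · exact isOpen_compl_singleton.prod isOpen_univ
  · rw [isConnected_iff_connectedSpace]; infer_instance
  · infer_instance

lemma compact_f (z : Ann) :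
    IsCompact (connectedComponentIn (Function.fixedPoints fA) z) := by
  apply Set.Finite.isCompact
  refine Set.Finite.subset ?_ (connectedComponentIn_subset _ _)
  have hT : (ee ⁻¹' ({Complex.I, -Complex.I} : Set ℂ)).Finite :=
    (Set.toFinite _).preimage (fun _ _ _ _ h => ee_inj h)
  refine (hT.prod (Set.finite_singleton (0 : ℝ))).subset ?_
  intro y hy
  obtain ⟨h1, h2⟩ := fixed_f hy
  refine ⟨?_, h1⟩
  have h3 := ee_sq y.1
  rw [h2] at h3
  have h4 : ((ee y.1).im - 1) * ((ee y.1).im + 1) = 0 := by linarith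
  rcases mul_eq_zero.1 h4 with h | h
  · left; apply Complex.ext <;> simp [h2]; linarith
  · right
    change ee y.1 = -Complex.I
    apply Complex.ext <;> simp [h2]; linarith

lemma zero_of_rotK {K : Set Ann} (hK : IsCompact K) (z : ℕ → ℝ × ℝ) (n : ℕ → ℕ)
    (hn : Tendsto n atTop atTop) (h : ∀ k, pA (z k) ∈ K ∧ pA ((⇑fC)^[n k] (z k)) ∈ K) :
    Tendsto (fun k => (((((⇑fC)^[n k] (z k)).1 - (z k).1) / (n k) : ℝ) : EReal))
      atTop (nhds 0) := by
  obtain ⟨C, hC⟩ := hK.exists_bound_of_continuousOn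
    (f := fun z : Ann => sig z.2) (continuous_sig.comp' continuous_snd).continuousOn
  have hb : ∀ k, |((⇑fC)^[n k] (z k)).1 - (z k).1| ≤ 1 / 2 + C + C := by
    intro k
    rw [disp_f]
    have h1 := hC _ (h k).1
    have h2 := hC _ (h k).2
    have h3 := abs_DD_le (n k) (pA (Kch (z k)))
    simp only [pA, Real.norm_eq_abs] at h1 h2
    exact (abs_sub _ _).trans (add_le_add ((abs_add_le _ _).trans (add_le_add h3 h2)) h1)
  have hreal : Tendsto (fun k => (((⇑fC)^[n k] (z k)).1 - (z k).1) / (n k : ℝ)) atTop (nhds 0) := by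
    have hn' : Tendsto (fun k => (n k : ℝ)) atTop atTop := tendsto_natCast_atTop_atTop.comp hn
    apply squeeze_zero_norm (a := fun k => (1 / 2 + C + C) / (n k : ℝ))
    · intro k
      rw [norm_div, Real.norm_eq_abs, Real.norm_natCast]
      have := hb k
      gcongr
    · exact hn'.const_div_atTop _
  exact (continuous_coe_real_ereal.tendsto 0).comp hreal

lemma rot_f : rot fC = {(0 : EReal)} := by
  have : (⋃ (K : Set Ann) (_ : IsCompact K), rotK fC K) = {(0 : EReal)} := by
    apply Set.Subset.antisymm
    · intro ρ hρ
      simp only [mem_iUnion] at hρ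
      obtain ⟨K, hK, z, n, hn, h, hlim⟩ := hρ
      exact tendsto_nhds_unique hlim (zero_of_rotK hK z n hn h)
    · rintro _ rfl
      simp only [mem_iUnion]
      let p : ℝ × ℝ := (1 / 4, 0)
      have hee : ee ((1 / 4 : ℝ) : T1) = Complex.I := by
        rw [ee_coe]
        have : (2 * Real.pi * (1 / 4) : ℝ) = Real.pi / 2 := by ring
        rw [this]; push_cast
        exact Complex.exp_pi_div_two_mul_I
      have hK : Kh (pA p) = pA p := by
        simp [Kh, pA, p, kaph_apply, kap_zero, sig]
      have hfix : ∀ n : ℕ, pA ((⇑fC)^[n] p) = pA p := by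
        intro n
        rw [fC_iter, pA_Kch_symm, pA_Fc, pA_Kch, Homeomorph.symm_apply_eq, hK]
        apply FF_fixed'
        · rfl
        · change (ee ((1 / 4 : ℝ) : T1)).re = 0
          rw [hee]; simp
      refine ⟨{pA p}, isCompact_singleton, fun _ => p, id, tendsto_id, fun k => ⟨rfl, hfix k⟩, ?_⟩
      exact zero_of_rotK isCompact_singleton (fun _ => p) id tendsto_id fun k => ⟨rfl, hfix k⟩
  rw [rot, this, closure_singleton]

lemma disp3_f (j : ℕ) : (⇑fC)^[4 ^ j + 1] (0, (j : ℝ)) = ((j : ℝ), (j : ℝ) + 1 / 2) := by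
  rw [fC_iter, Homeomorph.symm_apply_eq]
  have s1 : sig j = 0 := by
    have : Real.cos (2 * Real.pi * j) = 1 := by
      rw [mul_comm]; exact Real.cos_nat_mul_two_pi j
    simp [sig, this]
  have s2 : sig ((j : ℝ) + 1 / 2) = j := by
    have : Real.cos (2 * Real.pi * ((j : ℝ) + 1 / 2)) = -1 := by
      have e : 2 * Real.pi * ((j : ℝ) + 1 / 2) = j * (2 * Real.pi) + Real.pi := by ring
      rw [e]; exact Real.cos_nat_mul_two_pi_add_pi j
    simp only [sig, this]; ring
  have k1 : Kch (0, (j : ℝ)) = (0, kap j) := by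
    change ((0 : ℝ) - sig j, kap j) = _
    rw [s1]; simp
  have k2 : Kch ((j : ℝ), (j : ℝ) + 1 / 2) = (0, kap (j + 1 / 2)) := by
    change ((j : ℝ) - sig (j + 1 / 2), kap (j + 1 / 2)) = _
    rw [s2]; simp
  rw [k1, k2, Fc_line]
  congr 1
  unfold kap
  have h4 : (4 : ℝ) ^ ((1 : ℝ) / 2) = 2 := by
    rw [← Real.sqrt_eq_rpow]
    rw [show (4 : ℝ) = 2 ^ 2 by norm_num]
    exact Real.sqrt_sq (by norm_num)
  rw [Real.rpow_add (by norm_num), h4, Real.rpow_natCast]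
  push_cast; ring

/-- **Proposition 5.1.** There is an irrotational measure-preserving homeomorphism
`f_bound` of the open annulus whose lifted displacement within compact sets is
unbounded as the compact sets grow, whose fixed point set behaves as in Theorem A,
and which extends to the semi-closed annulus as the identity on the circle at `+∞`. -/
theorem exists_f_bound :
    ∃ (f : Ann ≃ₜ Ann) (fc : (ℝ × ℝ) ≃ₜ (ℝ × ℝ)) (μ : Measure Ann),
      IsotopicToId f ∧ InvariantFullMeasure f μ ∧ IsLift f fc ∧
      rot fc = {(0 : EReal)} ∧
      (∃ U : Set Ann, IsOpenTopDisk U ∧ pA '' Function.fixedPoints fc ⊆ U) ∧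
      (∀ z ∈ Function.fixedPoints f,
        IsCompact (connectedComponentIn (Function.fixedPoints f) z)) ∧
      (∀ η : ℝ, 0 < η → ∀ j : ℕ, 1 ≤ j →
        ∃ zc ∈ Set.Icc (0 : ℝ) η ×ˢ Set.Icc (j : ℝ) ((j : ℝ) + 1), ∃ n : ℕ, 1 ≤ n ∧
          (⇑fc)^[n] zc ∈ Set.Icc (j : ℝ) ((j : ℝ) + η) ×ˢ Set.Icc (j : ℝ) ((j : ℝ) + 1)) ∧
      (∀ C : ℝ, ∃ Y : ℝ, ∀ z : Ann, Y ≤ z.2 → C ≤ (f z).2) ∧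
      (∀ ε : ℝ, 0 < ε → ∃ Y : ℝ, ∀ z : Ann, Y ≤ z.2 → dist (f z).1 z.1 < ε) := by
  obtain ⟨μ, hμ⟩ := measure_f
  have hw : ∀ z : Ann, |kap (fA z).2 - kap z.2| ≤ 2 := by
    intro z
    have h1 : kap (fA z).2 = WW 1 (Kh z) := kap_symm _
    rw [h1]
    exact WW_bound (Kh z)
  refine ⟨fA, fC, μ, isotopic_f, hμ, isLift_f, rot_f, disk_f, fun z _ => compact_f z, ?_, ?_, ?_⟩
  · intro η hη j hj
    refine ⟨(0, (j : ℝ)), ⟨⟨le_rfl, hη.le⟩, ⟨le_rfl, by simp⟩⟩, 4 ^ j + 1, Nat.le_add_left 1 _, ?_⟩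
    rw [disp3_f]
    exact ⟨⟨le_rfl, by simp; linarith⟩, ⟨by simp, by simp; norm_num⟩⟩
  · intro C
    refine ⟨kaph.symm (kap C + 2), fun z hz => ?_⟩
    have h1 := strictMono_kap.monotone hz
    rw [kap_symm] at h1
    have h2 := (abs_le.1 (hw z)).1
    apply strictMono_kap.le_iff_le.1
    linarith
  · intro ε hε
    obtain ⟨Y1, h1⟩ := sig_small (ε / 2) (by linarith)
    obtain ⟨R, h2⟩ := DD_small (ε / 2) (by linarith)
    refine ⟨max Y1 (kaph.symm R), fun z hz => ?_⟩
    have a1 := h1 z.2 (fA z).2 ((le_max_left _ _).trans hz) (hw z)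
    have a2 : R ≤ kap z.2 := by
      have := strictMono_kap.monotone ((le_max_right _ _).trans hz)
      rwa [kap_symm] at this
    have a3 := h2 (Kh z) a2
    have e : (fA z).1 - z.1 = ((DD 1 (Kh z) + (sig (fA z).2 - sig z.2) : ℝ) : T1) := by
      have : (fA z).1 = (z.1 - ((sig z.2 : ℝ) : T1)) + ((DD 1 (Kh z) : ℝ) : T1)
          + ((sig (fA z).2 : ℝ) : T1) := rfl
      rw [this, AddCircle.coe_add, AddCircle.coe_sub]
      abel
    rw [dist_eq_norm, e]
    have h5 : ‖((DD 1 (Kh z) + (sig (fA z).2 - sig z.2) : ℝ) : T1)‖ ≤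
        |DD 1 (Kh z) + (sig (fA z).2 - sig z.2)| := QuotientAddGroup.norm_mk_le_norm
    have h6 := abs_add_le (DD 1 (Kh z)) (sig (fA z).2 - sig z.2)
    linarith
end
end

section
/- There exists a homeomorphism f of the open annulus 𝔸 = 𝕋¹ × ℝ which is irrotational, preserves a Borel probability measure of full support, and, denoting by f̌ its irrotational lift to ℝ², satisfies: (1) there is an open topological disk U ⊆ 𝔸 with π(Fix(f̌)) ⊆ U; and (2) there exists a compact set K₀ ⊆ 𝔸 such that for every real number M > 0 there exist a point ž ∈ ℝ² and an integer n ≥ 1 with ž ∈ π⁻¹(K₀), f̌ⁿ(ž) ∈ π⁻¹(K₀), and |p₁(f̌ⁿ(ž)) − p₁(ž)| ≥ M. -/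
open MeasureTheory Filter Topology Set

noncomputable section

/-! ### The model flow on the `(u, Z)` plane -/

def fnH (u Z : ℝ) : ℝ := Real.cos (2 * Real.pi * u) / √(1 + Z ^ 2)

def fnZ (s u Z : ℝ) : ℝ :=
  s * Real.sinc (fnH u Z * s) * Real.sin (2 * Real.pi * u) + Real.cos (fnH u Z * s) * Z

def fnY (s u Z : ℝ) : ℝ :=
  Real.cos (fnH u Z * s) * Real.sin (2 * Real.pi * u) - fnH u Z * Real.sin (fnH u Z * s) * Z

def fnX (s u Z : ℝ) : ℝ := fnH u Z * √(1 + (fnZ s u Z) ^ 2)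

/-- quotient of new by old direction -/
def fnQ (s u Z : ℝ) : ℂ :=
  ⟨fnX s u Z * Real.cos (2 * Real.pi * u) + fnY s u Z * Real.sin (2 * Real.pi * u),
   fnY s u Z * Real.cos (2 * Real.pi * u) - fnX s u Z * Real.sin (2 * Real.pi * u)⟩

def fnU (s u Z : ℝ) : ℝ := u + Complex.arg (fnQ s u Z) / (2 * Real.pi)

lemma fn_S_pos (Z : ℝ) : 0 < √(1 + Z ^ 2) := Real.sqrt_pos.2 (by positivity)

lemma fn_S_sq (Z : ℝ) : √(1 + Z ^ 2) ^ 2 = 1 + Z ^ 2 := Real.sq_sqrt (by positivity)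

lemma fn_HS (u Z : ℝ) : fnH u Z * √(1 + Z ^ 2) = Real.cos (2 * Real.pi * u) := by
  unfold fnH; field_simp [(fn_S_pos Z).ne']

lemma fn_inv (u Z : ℝ) :
    (fnH u Z) ^ 2 * (1 + Z ^ 2) + Real.sin (2 * Real.pi * u) ^ 2 = 1 := by
  rw [← fn_S_sq Z, ← mul_pow, fn_HS, Real.cos_sq_add_sin_sq]

lemma fn_sinc (x s : ℝ) : x * (s * Real.sinc (x * s)) = Real.sin (x * s) := by
  by_cases h : x * s = 0
  · rw [h]; simp; rcases mul_eq_zero.1 h with h | h <;> simp [h]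
  · rw [Real.sinc_of_ne_zero h, ← mul_assoc, mul_div_cancel₀ _ h]

lemma fn_HZ (s u Z : ℝ) : fnH u Z * fnZ s u Z =
    Real.sin (fnH u Z * s) * Real.sin (2 * Real.pi * u) +
      Real.cos (fnH u Z * s) * (fnH u Z * Z) := by
  unfold fnZ
  rw [← fn_sinc (fnH u Z) s]; ring

lemma fn_norm (s u Z : ℝ) : fnX s u Z ^ 2 + fnY s u Z ^ 2 = 1 := by
  have h1 := fn_HZ s u Z
  have h2 := fn_inv u Z
  have h3 := Real.sin_sq_add_cos_sq (fnH u Z * s)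
  unfold fnX
  rw [mul_pow, fn_S_sq]
  have : fnH u Z ^ 2 * (1 + fnZ s u Z ^ 2) = fnH u Z ^ 2 + (fnH u Z * fnZ s u Z) ^ 2 := by ring
  rw [this, h1]
  unfold fnY
  generalize fnH u Z = h at *
  generalize Real.sin (h * s) = a at *
  generalize Real.cos (h * s) = b at *
  generalize Real.sin (2 * Real.pi * u) = y at *
  linear_combination h2 + (y ^ 2 + h ^ 2 * Z ^ 2) * h3

lemma fn_Qnorm (s u Z : ℝ) : ‖fnQ s u Z‖ = 1 := by
  have h1 := fn_norm s u Z
  have h3 := Real.sin_sq_add_cos_sq (2 * Real.pi * u)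
  have : ‖fnQ s u Z‖ ^ 2 = 1 := by
    rw [Complex.sq_norm, Complex.normSq_apply]
    simp only [fnQ]
    generalize Real.sin (2 * Real.pi * u) = a at *
    generalize Real.cos (2 * Real.pi * u) = b at *
    linear_combination (a ^ 2 + b ^ 2) * h1 + h3
  nlinarith [norm_nonneg (fnQ s u Z)]

lemma fn_slit (s u Z : ℝ) : fnQ s u Z ∈ Complex.slitPlane := by
  rw [Complex.mem_slitPlane_iff]
  have hS := fn_S_pos Z
  have hS1 := fn_S_pos (fnZ s u Z)
  have hHS := fn_HS u Z
  have hinv := fn_inv u Z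
  by_cases h0 : fnH u Z = 0
  · left
    simp only [fnQ, fnX, fnY, h0]
    rw [h0] at hinv
    simp
    nlinarith
  · by_contra hc
    push Not at hc
    obtain ⟨hre, him⟩ := hc
    simp only [fnQ, fnX] at hre him
    rw [← hHS] at hre him
    generalize fnY s u Z = Y1 at *
    generalize √(1 + Z ^ 2) = S at *
    generalize √(1 + (fnZ s u Z) ^ 2) = S1 at *
    generalize Real.sin (2 * Real.pi * u) = y at *
    generalize fnH u Z = h at *
    have e : Y1 * S = S1 * y := by
      apply mul_left_cancel₀ h0; linarith
    have hpos : 0 < h ^ 2 * S1 * S := by positivity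
    have : 0 ≤ Y1 * y * S := by
      have : Y1 * y * S = S1 * y ^ 2 := by linear_combination y * e
      rw [this]; positivity
    have : 0 ≤ Y1 * y := nonneg_of_mul_nonneg_left this hS
    nlinarith

lemma fn_cosU (s u Z : ℝ) : Real.cos (2 * Real.pi * fnU s u Z) = fnX s u Z ∧
    Real.sin (2 * Real.pi * fnU s u Z) = fnY s u Z := by
  have hq : fnQ s u Z ≠ 0 := Complex.slitPlane_ne_zero (fn_slit s u Z)
  have hc := Complex.cos_arg hq
  have hs := Complex.sin_arg (fnQ s u Z)
  rw [fn_Qnorm, div_one] at hc hs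
  have e : 2 * Real.pi * fnU s u Z = 2 * Real.pi * u + Complex.arg (fnQ s u Z) := by
    unfold fnU; field_simp
  have h3 := Real.sin_sq_add_cos_sq (2 * Real.pi * u)
  rw [e, Real.cos_add, Real.sin_add, hc, hs]
  simp only [fnQ]
  constructor
  · linear_combination fnX s u Z * h3
  · linear_combination fnY s u Z * h3

lemma fn_HU (s u Z : ℝ) : fnH (fnU s u Z) (fnZ s u Z) = fnH u Z := by
  unfold fnH
  rw [(fn_cosU s u Z).1]
  unfold fnX
  rw [mul_div_assoc, div_self (fn_S_pos (fnZ s u Z)).ne', mul_one]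
  rfl

lemma fn_Zadd (s t u Z : ℝ) : fnZ s (fnU t u Z) (fnZ t u Z) = fnZ (s + t) u Z := by
  have h1 : fnZ s (fnU t u Z) (fnZ t u Z) =
    s * Real.sinc (fnH u Z * s) * fnY t u Z + Real.cos (fnH u Z * s) * fnZ t u Z := by
    rw [fnZ, fn_HU, (fn_cosU t u Z).2]
  rw [h1]
  by_cases h0 : fnH u Z = 0
  · simp [fnY, fnZ, h0]; ring
  · apply mul_left_cancel₀ h0
    rw [mul_add, ← mul_assoc (fnH u Z) (s * _), fn_sinc, fn_HZ]
    have := fn_HZ t u Z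
    rw [mul_left_comm, this, mul_add (fnH u Z) s t, Real.sin_add, Real.cos_add, fnY]
    ring

lemma fn_Yadd (s t u Z : ℝ) : fnY s (fnU t u Z) (fnZ t u Z) = fnY (s + t) u Z := by
  rw [fnY, fn_HU, (fn_cosU t u Z).2, mul_right_comm, fn_HZ, fnY, fnY, mul_add, Real.cos_add,
    Real.sin_add]
  ring

lemma fn_Xadd (s t u Z : ℝ) : fnX s (fnU t u Z) (fnZ t u Z) = fnX (s + t) u Z := by
  rw [fnX, fn_HU, fn_Zadd, fnX]

lemma fn_arg_sub {w z : ℂ} (hw : 0 < w.re) (hz : 0 < z.re) :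
    Complex.arg (w * (starRingEnd ℂ) z) = Complex.arg w - Complex.arg z := by
  have h1 := abs_lt.1 (Complex.abs_arg_lt_pi_div_two_iff.2 (Or.inl hw))
  have h2 := abs_lt.1 (Complex.abs_arg_lt_pi_div_two_iff.2 (Or.inl hz))
  have hz' : z.arg ≠ Real.pi := by linarith [Real.pi_pos]
  have hc : Complex.arg ((starRingEnd ℂ) z) = - Complex.arg z := by
    rw [Complex.arg_conj, if_neg hz']
  rw [Complex.arg_mul, hc]; · ring
  · rintro rfl; simp at hw
  · intro h
    rw [map_eq_zero] at h
    subst h; simp at hz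
  · rw [hc]; constructor <;> linarith [h1.1, h1.2, h2.1, h2.2]

lemma fn_arg3 {h p1 p2 p3 y1 y2 y3 : ℝ} (h1 : 0 < p1) (h2 : 0 < p2) (h3 : 0 < p3) (h0 : h ≠ 0) :
    Complex.arg ((⟨h * p3, y3⟩ : ℂ) * (starRingEnd ℂ) ⟨h * p1, y1⟩) =
    Complex.arg ((⟨h * p2, y2⟩ : ℂ) * (starRingEnd ℂ) ⟨h * p1, y1⟩) +
    Complex.arg ((⟨h * p3, y3⟩ : ℂ) * (starRingEnd ℂ) ⟨h * p2, y2⟩) := by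
  rcases lt_or_gt_of_ne h0 with hn | hp
  · have key : ∀ a b c d : ℝ, (⟨a, b⟩ : ℂ) * (starRingEnd ℂ) ⟨c, d⟩ =
        (⟨-a, -b⟩ : ℂ) * (starRingEnd ℂ) ⟨-c, -d⟩ := by
      intro a b c d; apply Complex.ext <;> simp
    rw [key, key (h * p2), key (h * p3) _ (h * p2)]
    have q1 : 0 < -(h * p1) := by nlinarith
    have q2 : 0 < -(h * p2) := by nlinarith
    have q3 : 0 < -(h * p3) := by nlinarith
    rw [fn_arg_sub, fn_arg_sub, fn_arg_sub] <;> first | assumption | ring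
  · rw [fn_arg_sub, fn_arg_sub, fn_arg_sub] <;> first | (dsimp only; positivity) | ring

lemma fn_Q_eq (s u Z : ℝ) : fnQ s u Z = (⟨fnX s u Z, fnY s u Z⟩ : ℂ) *
    (starRingEnd ℂ) ⟨Real.cos (2 * Real.pi * u), Real.sin (2 * Real.pi * u)⟩ := by
  apply Complex.ext <;> simp [fnQ]
  ring

lemma fn_Uadd (s t u Z : ℝ) : fnU s (fnU t u Z) (fnZ t u Z) = fnU (s + t) u Z := by
  have : Complex.arg (fnQ (s + t) u Z) =
      Complex.arg (fnQ t u Z) + Complex.arg (fnQ s (fnU t u Z) (fnZ t u Z)) := by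
    rw [fn_Q_eq, fn_Q_eq, fn_Q_eq, fn_Xadd, fn_Yadd, (fn_cosU t u Z).1, (fn_cosU t u Z).2]
    by_cases h0 : fnH u Z = 0
    · have hy : ∀ s, fnY s u Z = Real.sin (2 * Real.pi * u) := by intro s; simp [fnY, h0]
      have hx : ∀ s, fnX s u Z = 0 := by intro s; simp [fnX, h0]
      have hc : Real.cos (2 * Real.pi * u) = 0 := by rw [← fn_HS u Z, h0, zero_mul]
      have hs := Real.sin_sq_add_cos_sq (2 * Real.pi * u)
      have : (⟨0, Real.sin (2 * Real.pi * u)⟩ : ℂ) *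
          (starRingEnd ℂ) ⟨0, Real.sin (2 * Real.pi * u)⟩ = 1 := by
        apply Complex.ext <;> simp
        rw [hc] at hs; nlinarith
      simp only [hy, hx, hc, this]; simp
    · rw [← fn_HS u Z]
      exact fn_arg3 (fn_S_pos _) (fn_S_pos _) (fn_S_pos _) h0
  change fnU t u Z + _ / _ = u + _ / _
  rw [this, add_div, ← add_assoc]; rfl

lemma fn_Z0 (u Z : ℝ) : fnZ 0 u Z = Z := by simp [fnZ]

lemma fn_U0 (u Z : ℝ) : fnU 0 u Z = u := by
  have hx : fnX 0 u Z = Real.cos (2 * Real.pi * u) := by rw [fnX, fn_Z0, fn_HS]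
  have hy : fnY 0 u Z = Real.sin (2 * Real.pi * u) := by simp [fnY]
  have : fnQ 0 u Z = 1 := by
    have hs := Real.sin_sq_add_cos_sq (2 * Real.pi * u)
    apply Complex.ext <;> simp [fnQ, hx, hy]
    · linarith
    · ring
  simp [fnU, this]

lemma fn_cos1 (u : ℝ) : Real.cos (2 * Real.pi * (u + 1)) = Real.cos (2 * Real.pi * u) := by
  rw [mul_add, mul_one, Real.cos_add_two_pi]

lemma fn_sin1 (u : ℝ) : Real.sin (2 * Real.pi * (u + 1)) = Real.sin (2 * Real.pi * u) := by
  rw [mul_add, mul_one, Real.sin_add_two_pi]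

lemma fn_H1 (u Z : ℝ) : fnH (u + 1) Z = fnH u Z := by rw [fnH, fnH, fn_cos1]
lemma fn_Z1 (s u Z : ℝ) : fnZ s (u + 1) Z = fnZ s u Z := by rw [fnZ, fnZ, fn_H1, fn_sin1]
lemma fn_Y1 (s u Z : ℝ) : fnY s (u + 1) Z = fnY s u Z := by rw [fnY, fnY, fn_H1, fn_sin1]
lemma fn_X1 (s u Z : ℝ) : fnX s (u + 1) Z = fnX s u Z := by rw [fnX, fnX, fn_H1, fn_Z1]
lemma fn_U1 (s u Z : ℝ) : fnU s (u + 1) Z = fnU s u Z + 1 := by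
  rw [fnU, fnU, fnQ, fnQ, fn_X1, fn_Y1, fn_cos1, fn_sin1]; ring

lemma fn_Ubound (s u Z : ℝ) : |fnU s u Z - u| ≤ 1 := by
  have := Complex.abs_arg_le_pi (fnQ s u Z)
  have hp := Real.pi_pos
  rw [fnU, add_sub_cancel_left, abs_div, abs_of_pos (by positivity : 0 < 2 * Real.pi),
    div_le_one (by positivity)]
  linarith

lemma fn_Zbound (s u Z : ℝ) : |fnZ s u Z - Z| ≤ |s| + s ^ 2 := by
  have hinv := fn_inv u Z
  have h1 := Real.abs_sinc_le_one (fnH u Z * s)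
  have h2 := Real.abs_sin_le_one (2 * Real.pi * u)
  have h3 := @Real.one_sub_sq_div_two_le_cos (fnH u Z * s)
  have h4 := Real.cos_le_one (fnH u Z * s)
  have e : fnZ s u Z - Z = s * Real.sinc (fnH u Z * s) * Real.sin (2 * Real.pi * u) +
      (Real.cos (fnH u Z * s) - 1) * Z := by rw [fnZ]; ring
  rw [e]
  refine (abs_add_le _ _).trans (add_le_add ?_ ?_)
  · rw [abs_mul, abs_mul]
    calc _ ≤ |s| * 1 * 1 := by gcongr
      _ = |s| := by ring
  · rw [abs_mul, abs_of_nonpos (by linarith)]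
    have hH : fnH u Z ^ 2 * |Z| ≤ 1 := by
      have : fnH u Z ^ 2 * (1 + Z ^ 2) ≤ 1 := by nlinarith [sq_nonneg (Real.sin (2 * Real.pi * u))]
      have h5 : |Z| ≤ 1 + Z ^ 2 := by
        rw [← sq_abs Z]; nlinarith [sq_nonneg (|Z| - 1), abs_nonneg Z]
      nlinarith [sq_nonneg (fnH u Z)]
    have : -(Real.cos (fnH u Z * s) - 1) ≤ fnH u Z ^ 2 * s ^ 2 := by
      rw [mul_pow] at h3; nlinarith [mul_nonneg (sq_nonneg (fnH u Z)) (sq_nonneg s)]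
    calc _ ≤ fnH u Z ^ 2 * s ^ 2 * |Z| := by gcongr
      _ = (fnH u Z ^ 2 * |Z|) * s ^ 2 := by ring
      _ ≤ 1 * s ^ 2 := by gcongr
      _ = s ^ 2 := one_mul _

lemma fn_contH : Continuous fun p : ℝ × ℝ => fnH p.1 p.2 := by
  unfold fnH
  exact Continuous.div (by fun_prop) (by fun_prop) (fun p => (fn_S_pos p.2).ne')

lemma fn_contZ : Continuous fun p : ℝ × ℝ × ℝ => fnZ p.1 p.2.1 p.2.2 := by
  unfold fnZ
  have h : Continuous fun p : ℝ × ℝ × ℝ => fnH p.2.1 p.2.2 := fn_contH.comp continuous_snd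
  have := Real.continuous_sinc.comp (h.mul continuous_fst)
  simp only [Function.comp_def] at this
  fun_prop

lemma fn_contY : Continuous fun p : ℝ × ℝ × ℝ => fnY p.1 p.2.1 p.2.2 := by
  unfold fnY
  have h : Continuous fun p : ℝ × ℝ × ℝ => fnH p.2.1 p.2.2 := fn_contH.comp continuous_snd
  fun_prop

lemma fn_contX : Continuous fun p : ℝ × ℝ × ℝ => fnX p.1 p.2.1 p.2.2 := by
  unfold fnX
  have h : Continuous fun p : ℝ × ℝ × ℝ => fnH p.2.1 p.2.2 := fn_contH.comp continuous_snd
  have := fn_contZ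
  fun_prop

lemma fn_contQ : Continuous fun p : ℝ × ℝ × ℝ => fnQ p.1 p.2.1 p.2.2 := by
  have hx := fn_contX
  have hy := fn_contY
  have : (fun p : ℝ × ℝ × ℝ => fnQ p.1 p.2.1 p.2.2) = fun p : ℝ × ℝ × ℝ =>
    ((fnX p.1 p.2.1 p.2.2 : ℂ) + (fnY p.1 p.2.1 p.2.2 : ℂ) * Complex.I) *
     ((Real.cos (2 * Real.pi * p.2.1) : ℂ) - (Real.sin (2 * Real.pi * p.2.1) : ℂ) * Complex.I) := by
    ext p
    apply Complex.ext <;> simp [fnQ, -Complex.ofReal_cos, -Complex.ofReal_sin]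
    ring
  rw [this]
  fun_prop

lemma fn_contU : Continuous fun p : ℝ × ℝ × ℝ => fnU p.1 p.2.1 p.2.2 := by
  unfold fnU
  have : Continuous fun p : ℝ × ℝ × ℝ => Complex.arg (fnQ p.1 p.2.1 p.2.2) := by
    rw [continuous_iff_continuousAt]
    intro p
    exact ContinuousAt.comp (f := fun p : ℝ × ℝ × ℝ => fnQ p.1 p.2.1 p.2.2)
      (Complex.continuousAt_arg (fn_slit _ _ _)) fn_contQ.continuousAt
  fun_prop

/-! ### The flow on the `(x, v)` plane -/

def fnTau (Z : ℝ) : ℝ := √(1 + |Z|) + 1 / 4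

def fnPhi (s x v : ℝ) : ℝ × ℝ :=
  if v ≤ 0 then (x, v) else
    (fnU s (x - fnTau (-Real.log v)) (-Real.log v) +
      fnTau (fnZ s (x - fnTau (-Real.log v)) (-Real.log v)),
      Real.exp (-fnZ s (x - fnTau (-Real.log v)) (-Real.log v)))

lemma fn_contTau : Continuous fnTau := by unfold fnTau; fun_prop

lemma fn_Tau_sub (a b : ℝ) : |fnTau a - fnTau b| ≤ √|a - b| := by
  have key : ∀ a b : ℝ, fnTau a - fnTau b ≤ √|a - b| := by
    intro a b
    have h1 : 1 + |a| ≤ (1 + |b|) + |a - b| := by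
      have := abs_sub_abs_le_abs_sub a b; linarith
    have h2 : √(1 + |a|) ≤ √(1 + |b|) + √|a - b| := by
      apply Real.sqrt_le_iff.2
      refine ⟨by positivity, ?_⟩
      have eb : √(1 + |b|) ^ 2 = 1 + |b| := Real.sq_sqrt (by positivity)
      have ec : √|a - b| ^ 2 = |a - b| := Real.sq_sqrt (abs_nonneg _)
      nlinarith [Real.sqrt_nonneg (1 + |b|), Real.sqrt_nonneg |a - b|,
        mul_nonneg (Real.sqrt_nonneg (1 + |b|)) (Real.sqrt_nonneg |a - b|)]
    unfold fnTau; linarith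
  rw [abs_le]
  have h1 := key a b
  have h2 := key b a
  rw [abs_sub_comm] at h2
  constructor <;> linarith

lemma fn_Tau_sub' (a b : ℝ) : |fnTau a - fnTau b| ≤ |a - b| / √(1 + |b|) := by
  have ha : 0 < √(1 + |a|) := Real.sqrt_pos.2 (by positivity)
  have hb : 0 < √(1 + |b|) := Real.sqrt_pos.2 (by positivity)
  have ea : √(1 + |a|) ^ 2 = 1 + |a| := Real.sq_sqrt (by positivity)
  have eb : √(1 + |b|) ^ 2 = 1 + |b| := Real.sq_sqrt (by positivity)
  rw [le_div_iff₀ hb]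
  have e : fnTau a - fnTau b = √(1 + |a|) - √(1 + |b|) := by unfold fnTau; ring
  have h := abs_abs_sub_abs_le a b
  rw [e]
  calc |√(1 + |a|) - √(1 + |b|)| * √(1 + |b|)
      ≤ |√(1 + |a|) - √(1 + |b|)| * (√(1 + |a|) + √(1 + |b|)) := by gcongr; linarith
    _ = |(√(1 + |a|) - √(1 + |b|)) * (√(1 + |a|) + √(1 + |b|))| := by
        rw [abs_mul, abs_of_pos (add_pos ha hb)]
    _ = |(|a| - |b|)| := by congr 1; nlinarith
    _ ≤ _ := h

lemma fn_Phi_neg {s x v : ℝ} (hv : v ≤ 0) : fnPhi s x v = (x, v) := by simp [fnPhi, hv]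

lemma fn_Phi_pos {s x v : ℝ} (hv : 0 < v) : fnPhi s x v =
    (fnU s (x - fnTau (-Real.log v)) (-Real.log v) +
      fnTau (fnZ s (x - fnTau (-Real.log v)) (-Real.log v)),
      Real.exp (-fnZ s (x - fnTau (-Real.log v)) (-Real.log v))) := by
  simp [fnPhi, not_le.2 hv]

lemma fn_Phi_pos_iff (s x v : ℝ) : 0 < (fnPhi s x v).2 ↔ 0 < v := by
  rcases le_or_gt v 0 with h | h
  · rw [fn_Phi_neg h]
  · rw [fn_Phi_pos h]; simp [h, Real.exp_pos]

lemma fn_Phi_uZ (s u Z : ℝ) : fnPhi s (u + fnTau Z) (Real.exp (-Z)) =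
    (fnU s u Z + fnTau (fnZ s u Z), Real.exp (-fnZ s u Z)) := by
  rw [fn_Phi_pos (Real.exp_pos _)]; simp

lemma fn_exists_uZ (x : ℝ) {v : ℝ} (hv : 0 < v) :
    ∃ u Z, x = u + fnTau Z ∧ v = Real.exp (-Z) :=
  ⟨x - fnTau (-Real.log v), -Real.log v, by ring, by rw [neg_neg, Real.exp_log hv]⟩

lemma fn_Phi_add (s t x v : ℝ) :
    fnPhi s (fnPhi t x v).1 (fnPhi t x v).2 = fnPhi (s + t) x v := by
  rcases le_or_gt v 0 with h | h
  · rw [fn_Phi_neg h, fn_Phi_neg h, fn_Phi_neg h]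
  · obtain ⟨u, Z, rfl, rfl⟩ := fn_exists_uZ x h
    rw [fn_Phi_uZ, fn_Phi_uZ, fn_Phi_uZ, fn_Uadd, fn_Zadd]

lemma fn_Phi_zero (x v : ℝ) : fnPhi 0 x v = (x, v) := by
  rcases le_or_gt v 0 with h | h
  · rw [fn_Phi_neg h]
  · obtain ⟨u, Z, rfl, rfl⟩ := fn_exists_uZ x h
    rw [fn_Phi_uZ, fn_U0, fn_Z0]

lemma fn_Phi_per (s x v : ℝ) : fnPhi s (x + 1) v = ((fnPhi s x v).1 + 1, (fnPhi s x v).2) := by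
  rcases le_or_gt v 0 with h | h
  · rw [fn_Phi_neg h, fn_Phi_neg h]
  · obtain ⟨u, Z, rfl, rfl⟩ := fn_exists_uZ x h
    rw [add_right_comm, fn_Phi_uZ, fn_Phi_uZ, fn_U1, fn_Z1]
    simp only [Prod.mk.injEq, and_true]; ring

/-- quantitative closeness of the rotation to the identity -/
lemma fn_Q_sub_one (s u Z : ℝ) :
    ‖fnQ s u Z - 1‖ ≤ (3 * |s| + 2 * s ^ 2) / √(1 + Z ^ 2) := by
  have hS := fn_S_pos Z
  have hinv := fn_inv u Z
  have hZb := fn_Zbound s u Z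
  have e : fnQ s u Z - 1 = (((fnX s u Z - Real.cos (2 * Real.pi * u) : ℝ) : ℂ) +
      ((fnY s u Z - Real.sin (2 * Real.pi * u) : ℝ) : ℂ) * Complex.I) *
      (starRingEnd ℂ) ⟨Real.cos (2 * Real.pi * u), Real.sin (2 * Real.pi * u)⟩ := by
    have h3 := Real.sin_sq_add_cos_sq (2 * Real.pi * u)
    rw [fn_Q_eq]
    apply Complex.ext <;> simp [-Complex.ofReal_cos, -Complex.ofReal_sin]
    · linear_combination h3
    · ring
  have hn : ‖(⟨Real.cos (2 * Real.pi * u), Real.sin (2 * Real.pi * u)⟩ : ℂ)‖ = 1 := by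
    have h3 := Real.sin_sq_add_cos_sq (2 * Real.pi * u)
    have : ‖(⟨Real.cos (2 * Real.pi * u), Real.sin (2 * Real.pi * u)⟩ : ℂ)‖ ^ 2 = 1 := by
      rw [Complex.sq_norm, Complex.normSq_apply]; dsimp only; linarith
    nlinarith [norm_nonneg (⟨Real.cos (2 * Real.pi * u), Real.sin (2 * Real.pi * u)⟩ : ℂ)]
  rw [e, norm_mul, RCLike.norm_conj, hn, mul_one]
  refine (norm_add_le _ _).trans ?_
  rw [norm_mul, Complex.norm_I, mul_one, Complex.norm_real, Complex.norm_real, Real.norm_eq_abs,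
    Real.norm_eq_abs]
  have hc := Real.abs_cos_le_one (2 * Real.pi * u)
  have hH : |fnH u Z| ≤ 1 / √(1 + Z ^ 2) := by
    rw [fnH, abs_div, abs_of_pos hS]; gcongr
  have hSge : 1 ≤ √(1 + Z ^ 2) := by rw [Real.one_le_sqrt]; nlinarith [sq_nonneg Z]
  have hZS : |Z| ≤ √(1 + Z ^ 2) := Real.abs_le_sqrt (by linarith)
  -- first part
  have h1 : |fnX s u Z - Real.cos (2 * Real.pi * u)| ≤ (|s| + s ^ 2) / √(1 + Z ^ 2) := by
    rw [← fn_HS u Z, fnX, ← mul_sub, abs_mul]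
    have h2 : |√(1 + fnZ s u Z ^ 2) - √(1 + Z ^ 2)| ≤ |fnZ s u Z - Z| := by
      have key : ∀ a b : ℝ, √(1 + a ^ 2) - √(1 + b ^ 2) ≤ |a - b| := by
        intro a b
        rw [sub_le_iff_le_add]
        apply Real.sqrt_le_iff.2
        have hb : |b| ≤ √(1 + b ^ 2) := Real.abs_le_sqrt (by linarith)
        have hb2 := fn_S_sq b
        have hbp := fn_S_pos b
        refine ⟨by positivity, ?_⟩
        have : (a - b) * b ≤ |a - b| * √(1 + b ^ 2) :=
          (le_abs_self _).trans (by rw [abs_mul]; gcongr)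
        nlinarith [sq_abs (a - b)]
      rw [abs_le]
      have k1 := key (fnZ s u Z) Z
      have k2 := key Z (fnZ s u Z)
      rw [abs_sub_comm] at k2
      constructor <;> linarith
    calc _ ≤ 1 / √(1 + Z ^ 2) * (|s| + s ^ 2) := by
          gcongr; exact h2.trans hZb
      _ = _ := by ring
  have h2 : |fnY s u Z - Real.sin (2 * Real.pi * u)| ≤ (2 * |s| + s ^ 2) / √(1 + Z ^ 2) := by
    have e2 : fnY s u Z - Real.sin (2 * Real.pi * u) =
        (Real.cos (fnH u Z * s) - 1) * Real.sin (2 * Real.pi * u)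
        + (- (Real.sin (fnH u Z * s) * (fnH u Z * Z))) := by rw [fnY]; ring
    have hs := Real.abs_sin_le_one (2 * Real.pi * u)
    have k1 : |Real.cos (fnH u Z * s) - 1| ≤ 1 / √(1 + Z ^ 2) * s ^ 2 := by
      have h3 := @Real.one_sub_sq_div_two_le_cos (fnH u Z * s)
      have h4 := Real.cos_le_one (fnH u Z * s)
      rw [abs_of_nonpos (by linarith)]
      have : fnH u Z ^ 2 ≤ 1 / √(1 + Z ^ 2) := by
        rw [← sq_abs]
        have : 1 / √(1 + Z ^ 2) ≤ 1 := by rw [div_le_one hS]; exact hSge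
        nlinarith [abs_nonneg (fnH u Z)]
      have : fnH u Z ^ 2 * s ^ 2 ≤ 1 / √(1 + Z ^ 2) * s ^ 2 := by gcongr
      rw [mul_pow] at h3
      nlinarith [mul_nonneg (sq_nonneg (fnH u Z)) (sq_nonneg s)]
    have k2 : |fnH u Z * Z| ≤ 1 := by
      rw [abs_mul]
      calc _ ≤ 1 / √(1 + Z ^ 2) * √(1 + Z ^ 2) := by gcongr
        _ = 1 := by field_simp
    have k3 : |Real.sin (fnH u Z * s)| ≤ 1 / √(1 + Z ^ 2) * |s| := by
      refine Real.abs_sin_le_abs.trans ?_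
      rw [abs_mul]; gcongr
    rw [e2]
    refine (abs_add_le _ _).trans ?_
    rw [abs_neg, abs_mul, abs_mul]
    calc _ ≤ (1 / √(1 + Z ^ 2) * s ^ 2) * 1 + (1 / √(1 + Z ^ 2) * |s|) * 1 := by gcongr
      _ = (|s| + s ^ 2) / √(1 + Z ^ 2) := by ring
      _ ≤ _ := by gcongr; linarith [abs_nonneg s]
  refine (add_le_add h1 h2).trans (le_of_eq ?_)
  ring

lemma fn_contPhi : Continuous fun p : ℝ × ℝ × ℝ => fnPhi p.1 p.2.1 p.2.2 := by
  rw [continuous_iff_continuousAt]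
  rintro ⟨s, x, v⟩
  rcases lt_trichotomy v 0 with hv | rfl | hv
  · have : ∀ᶠ p : ℝ × ℝ × ℝ in 𝓝 (s, x, v), p.2.2 < 0 :=
      (continuous_snd.comp continuous_snd).continuousAt.eventually (gt_mem_nhds hv)
    refine ContinuousAt.congr (f := fun p : ℝ × ℝ × ℝ => p.2) continuous_snd.continuousAt ?_
    filter_upwards [this] with p hp
    rw [fn_Phi_neg hp.le]
  · have hu : (univ : Set (ℝ × ℝ × ℝ)) = {p | p.2.2 ≤ 0} ∪ {p | 0 < p.2.2} := by
      ext p; simp [le_or_gt]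
    rw [← continuousWithinAt_univ, hu, continuousWithinAt_union]
    constructor
    · refine ContinuousWithinAt.congr (f := fun p : ℝ × ℝ × ℝ => p.2)
        continuous_snd.continuousWithinAt ?_ ?_
      · intro p hp; exact fn_Phi_neg hp
      · exact fn_Phi_neg le_rfl
    · set l := 𝓝[{p : ℝ × ℝ × ℝ | 0 < p.2.2}] (s, x, 0) with hl
      have hmem : ∀ᶠ p in l, 0 < p.2.2 := self_mem_nhdsWithin
      have hid : Tendsto (fun p : ℝ × ℝ × ℝ => p) l (𝓝 (s, x, 0)) := nhdsWithin_le_nhds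
      have hs : Tendsto (fun p : ℝ × ℝ × ℝ => p.1) l (𝓝 s) :=
        (continuous_fst.tendsto _).comp hid
      have hx : Tendsto (fun p : ℝ × ℝ × ℝ => p.2.1) l (𝓝 x) :=
        ((continuous_fst.comp continuous_snd).tendsto _).comp hid
      have hv0 : Tendsto (fun p : ℝ × ℝ × ℝ => p.2.2) l (𝓝 0) :=
        ((continuous_snd.comp continuous_snd).tendsto _).comp hid
      have hv : Tendsto (fun p : ℝ × ℝ × ℝ => p.2.2) l (𝓝[>] 0) :=
        tendsto_nhdsWithin_iff.2 ⟨hv0, hmem⟩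
      have hZ : Tendsto (fun p : ℝ × ℝ × ℝ => -Real.log p.2.2) l atTop :=
        tendsto_neg_atBot_atTop.comp (Real.tendsto_log_nhdsGT_zero.comp hv)
      have hZ2 : Tendsto (fun p : ℝ × ℝ × ℝ => √(1 + |-Real.log p.2.2|)) l atTop :=
        Real.tendsto_sqrt_atTop.comp
          (tendsto_atTop_add_const_left _ _ (tendsto_abs_atTop_atTop.comp hZ))
      have hZ3 : Tendsto (fun p : ℝ × ℝ × ℝ => √(1 + (-Real.log p.2.2) ^ 2)) l atTop :=
        Real.tendsto_sqrt_atTop.comp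
          (tendsto_atTop_add_const_left _ _ ((tendsto_pow_atTop two_ne_zero).comp hZ))
      set u : ℝ × ℝ × ℝ → ℝ := fun p => p.2.1 - fnTau (-Real.log p.2.2) with hudef
      have hc1 : Tendsto (fun p : ℝ × ℝ × ℝ => |p.1| + p.1 ^ 2) l (𝓝 (|s| + s ^ 2)) :=
        hs.abs.add (hs.pow 2)
      have hc2 : Tendsto (fun p : ℝ × ℝ × ℝ => 3 * |p.1| + 2 * p.1 ^ 2) l
          (𝓝 (3 * |s| + 2 * s ^ 2)) := (hs.abs.const_mul 3).add ((hs.pow 2).const_mul 2)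
      have hQ : Tendsto (fun p : ℝ × ℝ × ℝ => fnQ p.1 (u p) (-Real.log p.2.2)) l (𝓝 1) := by
        rw [tendsto_iff_norm_sub_tendsto_zero]
        exact squeeze_zero (fun _ => norm_nonneg _) (fun p => fn_Q_sub_one _ _ _)
          (hc2.div_atTop hZ3)
      have hA : Tendsto (fun p : ℝ × ℝ × ℝ =>
          Complex.arg (fnQ p.1 (u p) (-Real.log p.2.2)) / (2 * Real.pi)) l (𝓝 0) := by
        have h1 : ContinuousAt Complex.arg 1 := Complex.continuousAt_arg (by simp)
        have := (h1.tendsto.comp hQ).div_const (2 * Real.pi)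
        simpa using this
      have hT : Tendsto (fun p : ℝ × ℝ × ℝ => fnTau (fnZ p.1 (u p) (-Real.log p.2.2)) -
          fnTau (-Real.log p.2.2)) l (𝓝 0) := by
        rw [tendsto_zero_iff_abs_tendsto_zero]
        refine squeeze_zero (fun _ => abs_nonneg _) (fun p => ?_) (hc1.div_atTop hZ2)
        refine (fn_Tau_sub' _ _).trans ?_
        gcongr
        exact fn_Zbound _ _ _
      have hV : Tendsto (fun p : ℝ × ℝ × ℝ => Real.exp (-fnZ p.1 (u p) (-Real.log p.2.2))) l
          (𝓝 0) := by
        have hb : Tendsto (fun p : ℝ × ℝ × ℝ => Real.exp (|p.1| + p.1 ^ 2) * p.2.2) l (𝓝 0) := by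
          have := ((Real.continuous_exp.tendsto _).comp hc1).mul hv0
          simpa using this
        refine squeeze_zero' (Eventually.of_forall fun _ => (Real.exp_pos _).le) ?_ hb
        filter_upwards [hmem] with p hp
        conv_rhs => rw [← Real.exp_log hp, ← Real.exp_add]
        apply Real.exp_le_exp.2
        have := (abs_le.1 (fn_Zbound p.1 (u p) (-Real.log p.2.2))).1
        linarith
      have hfin : Tendsto (fun p : ℝ × ℝ × ℝ => ((p.2.1 +
          Complex.arg (fnQ p.1 (u p) (-Real.log p.2.2)) / (2 * Real.pi)) +
          (fnTau (fnZ p.1 (u p) (-Real.log p.2.2)) - fnTau (-Real.log p.2.2)),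
          Real.exp (-fnZ p.1 (u p) (-Real.log p.2.2)))) l (𝓝 (x, 0)) := by
        have := ((hx.add hA).add hT).prodMk_nhds hV
        simpa using this
      change Tendsto _ l (𝓝 (fnPhi s x 0))
      rw [fn_Phi_neg le_rfl]
      refine hfin.congr' ?_
      filter_upwards [hmem] with p hp
      rw [fn_Phi_pos hp]
      simp only [hudef, fnU, Prod.mk.injEq, and_true]
      ring
  · have hev : ∀ᶠ p : ℝ × ℝ × ℝ in 𝓝 (s, x, v), 0 < p.2.2 :=
      (continuous_snd.comp continuous_snd).continuousAt.eventually (lt_mem_nhds hv)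
    have hlog : ContinuousAt (fun p : ℝ × ℝ × ℝ => -Real.log p.2.2) (s, x, v) := by
      have : ContinuousAt (fun p : ℝ × ℝ × ℝ => p.2.2) (s, x, v) :=
        (continuous_snd.comp continuous_snd).continuousAt
      exact (this.log hv.ne').neg
    have hG : ContinuousAt (fun p : ℝ × ℝ × ℝ =>
        (p.1, p.2.1 - fnTau (-Real.log p.2.2), -Real.log p.2.2)) (s, x, v) := by
      refine continuousAt_fst.prodMk (ContinuousAt.prodMk (ContinuousAt.sub ?_ ?_) hlog)
      · exact (continuous_fst.comp continuous_snd).continuousAt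
      · exact fn_contTau.continuousAt.comp hlog
    have hU := fn_contU.continuousAt.comp hG
    have hZ := fn_contZ.continuousAt.comp hG
    refine ContinuousAt.congr ((hU.add (fn_contTau.continuousAt.comp hZ)).prodMk
      (Real.continuous_exp.continuousAt.comp hZ.neg)) ?_
    filter_upwards [hev] with p hp
    rw [fn_Phi_pos hp]
    rfl

/-! ### The flow on the plane and on the annulus -/

def fnA (x : ℝ) : ℝ := Real.sin (Real.pi * x) ^ 2

lemma fn_A_nonneg (x : ℝ) : 0 ≤ fnA x := sq_nonneg _

lemma fn_A_per (x : ℝ) : fnA (x + 1) = fnA x := by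
  unfold fnA; rw [mul_add, mul_one, Real.sin_add_pi, neg_sq]

lemma fn_contA : Continuous fnA := by unfold fnA; fun_prop

def fnP (x v : ℝ) : ℝ × ℝ := (x, -Real.log (v + fnA x))

def fnF (s : ℝ) (z : ℝ × ℝ) : ℝ × ℝ :=
  fnP (fnPhi s z.1 (Real.exp (-z.2) - fnA z.1)).1 (fnPhi s z.1 (Real.exp (-z.2) - fnA z.1)).2

lemma fn_exists_P (z : ℝ × ℝ) : ∃ v, 0 < v + fnA z.1 ∧ z = fnP z.1 v :=
  ⟨Real.exp (-z.2) - fnA z.1, by simp [Real.exp_pos], by simp [fnP]⟩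

lemma fn_Phi_mem (s x : ℝ) {v : ℝ} (h : 0 < v + fnA x) :
    0 < (fnPhi s x v).2 + fnA (fnPhi s x v).1 := by
  rcases le_or_gt v 0 with hv | hv
  · rw [fn_Phi_neg hv]; exact h
  · have := (fn_Phi_pos_iff s x v).2 hv
    linarith [fn_A_nonneg (fnPhi s x v).1]

lemma fn_F_P (s x : ℝ) {v : ℝ} (h : 0 < v + fnA x) :
    fnF s (fnP x v) = fnP (fnPhi s x v).1 (fnPhi s x v).2 := by
  simp [fnF, fnP, Real.exp_log h]

lemma fn_F_add (s t : ℝ) (z : ℝ × ℝ) : fnF s (fnF t z) = fnF (s + t) z := by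
  obtain ⟨v, h, hz⟩ := fn_exists_P z
  rw [hz, fn_F_P _ _ h, fn_F_P _ _ h, fn_F_P _ _ (fn_Phi_mem t z.1 h), fn_Phi_add]

lemma fn_F_zero (z : ℝ × ℝ) : fnF 0 z = z := by
  obtain ⟨v, h, hz⟩ := fn_exists_P z
  rw [hz, fn_F_P _ _ h, fn_Phi_zero]

lemma fn_F_per (s : ℝ) (z : ℝ × ℝ) : fnF s (z + (1, 0)) = fnF s z + (1, 0) := by
  obtain ⟨x, y⟩ := z
  simp [fnF, fnP, fn_A_per, fn_Phi_per]

lemma fn_contF : Continuous fun p : ℝ × (ℝ × ℝ) => fnF p.1 p.2 := by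
  have h1 : Continuous fun p : ℝ × (ℝ × ℝ) =>
      fnPhi p.1 p.2.1 (Real.exp (-p.2.2) - fnA p.2.1) := by
    have h0 := fn_contA
    have : Continuous fun p : ℝ × (ℝ × ℝ) =>
      ((p.1, p.2.1, Real.exp (-p.2.2) - fnA p.2.1) : ℝ × ℝ × ℝ) := by fun_prop
    exact fn_contPhi.comp this
  unfold fnF fnP
  refine h1.fst.prodMk (Continuous.neg (Continuous.log (h1.snd.add (fn_contA.comp h1.fst)) ?_))
  intro p
  exact (fn_Phi_mem p.1 p.2.1 (v := Real.exp (-p.2.2) - fnA p.2.1)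
    (by simp [Real.exp_pos])).ne'

def fnFc (s : ℝ) : (ℝ × ℝ) ≃ₜ (ℝ × ℝ) where
  toFun := fnF s
  invFun := fnF (-s)
  left_inv z := by rw [fn_F_add, neg_add_cancel, fn_F_zero]
  right_inv z := by rw [fn_F_add, add_neg_cancel, fn_F_zero]
  continuous_toFun := fn_contF.comp (Continuous.prodMk_right s)
  continuous_invFun := fn_contF.comp (Continuous.prodMk_right (-s))

lemma fn_F_int (s : ℝ) (z : ℝ × ℝ) (k : ℤ) : fnF s (z + ((k : ℝ), 0)) = fnF s z + ((k : ℝ), 0) := by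
  induction k with
  | zero =>
    have e : ∀ w : ℝ × ℝ, w + (((0 : ℤ) : ℝ), 0) = w := by
      intro w; ext <;> simp
    rw [e, e]
  | succ n ih =>
    have e : ∀ w : ℝ × ℝ, w + (((n + 1 : ℤ) : ℝ), 0) = (w + (((n : ℤ) : ℝ), 0)) + (1, 0) := by
      intro w; ext <;> simp; ring
    rw [e, fn_F_per, ih, e]
  | pred n ih =>
    have e : ∀ w : ℝ × ℝ, w + (((-n : ℤ) : ℝ), 0) = (w + (((-n - 1 : ℤ) : ℝ), 0)) + (1, 0) := by
      intro w; ext <;> simp; ring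
    rw [e, fn_F_per, e] at ih
    exact add_right_cancel ih

lemma fn_pA_eq {z w : ℝ × ℝ} (h : pA z = pA w) : ∃ k : ℤ, z = w + ((k : ℝ), 0) := by
  simp only [pA, Prod.mk.injEq] at h
  obtain ⟨h1, h2⟩ := h
  have : ((z.1 - w.1 : ℝ) : T1) = 0 := by
    rw [AddCircle.coe_sub, h1, sub_self]
  obtain ⟨k, hk⟩ := (AddCircle.coe_eq_zero_iff 1).1 this
  refine ⟨k, ?_⟩
  simp at hk
  ext
  · simp; linarith
  · simp [h2]

lemma fn_pA_int (w : ℝ × ℝ) (k : ℤ) : pA (w + ((k : ℝ), 0)) = pA w := by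
  have : (((k : ℝ)) : T1) = 0 := (AddCircle.coe_eq_zero_iff 1).2 ⟨k, by simp⟩
  simp [pA, this]

lemma fn_pA_quot : IsOpenQuotientMap pA :=
  IsOpenQuotientMap.prodMap (f := fun x : ℝ => (x : T1)) (g := fun y : ℝ => y)
    QuotientAddGroup.isOpenQuotientMap_mk IsOpenQuotientMap.id

def fnf (s : ℝ) (w : Ann) : Ann := pA (fnF s (Function.surjInv fn_pA_quot.surjective w))

lemma fn_f_pA (s : ℝ) (z : ℝ × ℝ) : fnf s (pA z) = pA (fnF s z) := by
  obtain ⟨k, hk⟩ := fn_pA_eq (Function.surjInv_eq fn_pA_quot.surjective (pA z))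
  rw [fnf, hk, fn_F_int, fn_pA_int]

lemma fn_f_add (s t : ℝ) (w : Ann) : fnf s (fnf t w) = fnf (s + t) w := by
  obtain ⟨z, rfl⟩ := fn_pA_quot.surjective w
  rw [fn_f_pA, fn_f_pA, fn_f_pA, fn_F_add]

lemma fn_f_zero (w : Ann) : fnf 0 w = w := by
  obtain ⟨z, rfl⟩ := fn_pA_quot.surjective w
  rw [fn_f_pA, fn_F_zero]

lemma fn_contf : Continuous fun p : ℝ × Ann => fnf p.1 p.2 := by
  have hq : IsOpenQuotientMap (Prod.map (id : ℝ → ℝ) pA) := IsOpenQuotientMap.id.prodMap fn_pA_quot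
  rw [hq.isQuotientMap.continuous_iff]
  have : (fun p : ℝ × Ann => fnf p.1 p.2) ∘ Prod.map (id : ℝ → ℝ) pA =
      fun p : ℝ × (ℝ × ℝ) => pA (fnF p.1 p.2) := by
    ext1 p; exact fn_f_pA _ _
  rw [this]
  exact fn_pA_quot.continuous.comp fn_contF

def fnfH (s : ℝ) : Ann ≃ₜ Ann where
  toFun := fnf s
  invFun := fnf (-s)
  left_inv z := by rw [fn_f_add, neg_add_cancel, fn_f_zero]
  right_inv z := by rw [fn_f_add, add_neg_cancel, fn_f_zero]
  continuous_toFun := fn_contf.comp (Continuous.prodMk_right s)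
  continuous_invFun := fn_contf.comp (Continuous.prodMk_right (-s))

lemma fn_isotopic : IsotopicToId (fnfH 1) :=
  ⟨fun p => fnf p.1 p.2, fn_contf.continuousOn, fn_f_zero, fun _ => rfl,
    fun t _ => ⟨fnfH t, fun _ => rfl⟩⟩

lemma fn_lift : IsLift (fnfH 1) (fnFc 1) := fun z => (fn_f_pA 1 z).symm

/-! ### Invariant measure -/

lemma fn_measure (f : Ann ≃ₜ Ann)
    (h : ∀ U : Set Ann, IsOpen U → U.Nonempty →
      ∃ ν : Measure Ann, IsProbabilityMeasure ν ∧ Measure.map f ν = ν ∧ 0 < ν U) :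
    ∃ μ, InvariantFullMeasure f μ := by
  have hb := TopologicalSpace.isBasis_countableBasis Ann
  have hne : (TopologicalSpace.countableBasis Ann).Nonempty := by
    obtain ⟨t, ht, -⟩ := hb.exists_subset_of_mem_open (mem_univ (0 : Ann)) isOpen_univ
    exact ⟨t, ht⟩
  obtain ⟨B, hB⟩ := (TopologicalSpace.countable_countableBasis Ann).exists_eq_range hne
  have hBm : ∀ n, B n ∈ TopologicalSpace.countableBasis Ann := fun n => by
    rw [hB]; exact mem_range_self n
  choose ν hν1 hν2 hν3 using fun n => h (B n)
    (TopologicalSpace.isOpen_of_mem_countableBasis (hBm n))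
    (TopologicalSpace.nonempty_of_mem_countableBasis (hBm n))
  have happ : ∀ s, MeasurableSet s →
      Measure.sum (fun n => ((2⁻¹ : ENNReal) ^ (n + 1)) • ν n) s
        = ∑' n, (2⁻¹ : ENNReal) ^ (n + 1) * ν n s := by
    intro s hs
    rw [Measure.sum_apply _ hs]; rfl
  refine ⟨Measure.sum fun n => ((2⁻¹ : ENNReal) ^ (n + 1)) • ν n, ⟨?_⟩, ?_, ?_⟩
  · rw [happ _ MeasurableSet.univ]
    have : ∀ n, ν n univ = 1 := fun n => (hν1 n).measure_univ
    simp only [this, mul_one]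
    rw [ENNReal.tsum_geometric_add_one, ENNReal.one_sub_inv_two, inv_inv]
    exact ENNReal.inv_mul_cancel two_ne_zero ENNReal.ofNat_ne_top
  · ext s hs
    have hf : Measurable f := f.continuous.measurable
    rw [Measure.map_apply hf hs, happ _ (hf hs), happ _ hs]
    congr 1; ext n
    rw [← Measure.map_apply hf hs, hν2 n]
  · rintro U hU ⟨x, hx⟩
    obtain ⟨t, ht, -, htU⟩ := hb.exists_subset_of_mem_open hx hU
    rw [hB] at ht
    obtain ⟨n, rfl⟩ := ht
    rw [happ _ hU.measurableSet]
    refine lt_of_lt_of_le ?_ (ENNReal.le_tsum n)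
    refine ENNReal.mul_pos (pow_ne_zero _ (by simp)) ?_
    exact ((hν3 n).trans_le (measure_mono htU)).ne'

lemma fn_orbit_measure (z : Ann) (P : ℝ) (hP : 0 < P) (hz : fnf P z = z) :
    ∃ ν : Measure Ann, IsProbabilityMeasure ν ∧ Measure.map (fnfH 1) ν = ν ∧
      ∀ U : Set Ann, IsOpen U → z ∈ U → 0 < ν U := by
  haveI : Fact (0 < P) := ⟨hP⟩
  have hper : Function.Periodic (fun s => fnf s z) P := by
    intro s; dsimp only; rw [← fn_f_add, hz]
  have hc0 : Continuous (fun s => fnf s z) := fn_contf.comp (Continuous.prodMk_left z)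
  set γ : AddCircle P → Ann := hper.lift with hγ
  have hc : Continuous γ := continuous_coinduced_dom.2 hc0
  have hcomm : ∀ t, fnfH 1 (γ t) = γ (t + ((1 : ℝ) : AddCircle P)) := by
    intro t
    induction t using QuotientAddGroup.induction_on with
    | H s =>
      have h1 : γ (s : AddCircle P) = fnf s z := rfl
      have h2 : γ ((s : AddCircle P) + ((1 : ℝ) : AddCircle P)) = fnf (s + 1) z := rfl
      rw [h1, h2, add_comm s 1, ← fn_f_add]; rfl
  refine ⟨Measure.map γ AddCircle.haarAddCircle,
    Measure.isProbabilityMeasure_map hc.measurable.aemeasurable, ?_, ?_⟩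
  · rw [Measure.map_map (fnfH 1).continuous.measurable hc.measurable]
    have : (fnfH 1) ∘ γ = γ ∘ (fun t => t + ((1 : ℝ) : AddCircle P)) := by
      ext1 t; exact hcomm t
    rw [this, ← Measure.map_map hc.measurable (by fun_prop), map_add_right_eq_self]
  · intro U hU hzU
    rw [Measure.map_apply hc.measurable hU.measurableSet]
    refine (hU.preimage hc).measure_pos _ ⟨((0 : ℝ) : AddCircle P), ?_⟩
    change fnf 0 z ∈ U
    rwa [fn_f_zero]

lemma fn_fix_measure (z : Ann) (hz : fnf 1 z = z) :
    ∃ ν : Measure Ann, IsProbabilityMeasure ν ∧ Measure.map (fnfH 1) ν = ν ∧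
      ∀ U : Set Ann, IsOpen U → z ∈ U → 0 < ν U := fn_orbit_measure z 1 one_pos hz

lemma fn_period (u Z : ℝ) (h : fnH u Z ≠ 0) :
    ∃ P, 0 < P ∧ fnU P u Z = u ∧ fnZ P u Z = Z := by
  refine ⟨2 * Real.pi / |fnH u Z|, by have := abs_pos.2 h; positivity, ?_⟩
  set P := 2 * Real.pi / |fnH u Z| with hP
  have hcs : Real.cos (fnH u Z * P) = 1 ∧ Real.sin (fnH u Z * P) = 0 := by
    rcases lt_or_gt_of_ne h with hn | hp
    · have : fnH u Z * P = -(2 * Real.pi) := by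
        rw [hP, abs_of_neg hn]; field_simp
      rw [this]; simp
    · have : fnH u Z * P = 2 * Real.pi := by
        rw [hP, abs_of_pos hp]; field_simp
      rw [this]; simp
  have hZ : fnZ P u Z = Z := by
    apply mul_left_cancel₀ h
    rw [fn_HZ, hcs.1, hcs.2]; ring
  refine ⟨?_, hZ⟩
  have hx : fnX P u Z = Real.cos (2 * Real.pi * u) := by rw [fnX, hZ, fn_HS]
  have hy : fnY P u Z = Real.sin (2 * Real.pi * u) := by rw [fnY, hcs.1, hcs.2]; ring
  have : fnQ P u Z = 1 := by
    have hs := Real.sin_sq_add_cos_sq (2 * Real.pi * u)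
    apply Complex.ext <;> simp [fnQ, hx, hy]
    · linarith
    · ring
  simp [fnU, this]

lemma fn_exists_measure : ∃ μ, InvariantFullMeasure (fnfH 1) μ := by
  apply fn_measure
  rintro V hV ⟨w, hw⟩
  suffices h : ∃ z ∈ V, ∃ P, 0 < P ∧ fnf P z = z by
    obtain ⟨z, hz, P, hP, hPz⟩ := h
    obtain ⟨ν, h1, h2, h3⟩ := fn_orbit_measure z P hP hPz
    exact ⟨ν, h1, h2, h3 V hV hz⟩
  obtain ⟨z, rfl⟩ := fn_pA_quot.surjective w
  obtain ⟨v, h, hz⟩ := fn_exists_P z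
  rcases le_or_gt v 0 with hv | hv
  · refine ⟨_, hw, 1, one_pos, ?_⟩
    rw [fn_f_pA, hz, fn_F_P _ _ h, fn_Phi_neg hv]
  · obtain ⟨u, Z, hx, rfl⟩ := fn_exists_uZ z.1 hv
    have hpos : ∀ x, 0 < Real.exp (-Z) + fnA x := fun x =>
      add_pos_of_pos_of_nonneg (Real.exp_pos _) (fn_A_nonneg x)
    have hc : Continuous fun ε : ℝ => pA (fnP (u + ε + fnTau Z) (Real.exp (-Z))) := by
      refine fn_pA_quot.continuous.comp ?_
      unfold fnP
      have := fn_contA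
      refine Continuous.prodMk (by fun_prop) (Continuous.neg (Continuous.log (by fun_prop) ?_))
      intro ε; exact (hpos _).ne'
    have key : ∃ ε, pA (fnP (u + ε + fnTau Z) (Real.exp (-Z))) ∈ V ∧ fnH (u + ε) Z ≠ 0 := by
      have h0 : pA (fnP (u + 0 + fnTau Z) (Real.exp (-Z))) ∈ V := by
        rw [add_zero, ← hx, ← hz]; exact hw
      by_cases hh : fnH u Z = 0
      · have hcos : Real.cos (2 * Real.pi * u) = 0 := by rw [← fn_HS u Z, hh, zero_mul]
        obtain ⟨r, hr, hball⟩ := Metric.isOpen_iff.1 (hV.preimage hc) 0 h0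
        refine ⟨min (r / 2) (1 / 8), hball ?_, ?_⟩
        · rw [Metric.mem_ball, Real.dist_eq, sub_zero, abs_of_pos (by positivity)]
          exact (min_le_left _ _).trans_lt (by linarith)
        · have he : 0 < min (r / 2) (1 / 8) := by positivity
          have he2 : min (r / 2) (1 / 8) ≤ 1 / 8 := min_le_right _ _
          generalize min (r / 2) (1 / 8) = ε at *
          unfold fnH
          refine div_ne_zero ?_ (fn_S_pos Z).ne'
          rw [mul_add, Real.cos_add, hcos, zero_mul, zero_sub, neg_ne_zero]
          refine mul_ne_zero ?_ (Real.sin_pos_of_pos_of_lt_pi ?_ ?_).ne'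
          · intro h0
            have := Real.sin_sq_add_cos_sq (2 * Real.pi * u)
            rw [h0, hcos] at this; norm_num at this
          · have := Real.pi_pos; positivity
          · nlinarith [Real.pi_pos]
      · exact ⟨0, h0, by rwa [add_zero]⟩
    obtain ⟨ε, hε, hne⟩ := key
    obtain ⟨P, hP, hPu, hPZ⟩ := fn_period _ _ hne
    refine ⟨_, hε, P, hP, ?_⟩
    rw [fn_f_pA, fn_F_P _ _ (hpos _), fn_Phi_uZ, hPu, hPZ]

/-! ### Rotation set -/

lemma fn_iter (n : ℕ) (z : ℝ × ℝ) : (⇑(fnFc 1))^[n] z = fnF n z := by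
  induction n with
  | zero => simp [fn_F_zero]
  | succ n ih =>
    rw [Function.iterate_succ_apply', ih]
    change fnF 1 (fnF n z) = _
    rw [fn_F_add]; congr 1; push_cast; ring

lemma fn_Zlin (n : ℕ) (u Z : ℝ) : |fnZ n u Z - Z| ≤ 2 * n := by
  induction n with
  | zero => simp [fn_Z0]
  | succ n ih =>
    have h1 : fnZ (n + 1 : ℕ) u Z = fnZ 1 (fnU n u Z) (fnZ n u Z) := by
      rw [fn_Zadd]; congr 1; push_cast; ring
    have h2 := fn_Zbound 1 (fnU n u Z) (fnZ n u Z)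
    rw [← h1] at h2
    have h3 := abs_sub_le (fnZ (n + 1 : ℕ) u Z) (fnZ n u Z) Z
    rw [abs_one] at h2
    push_cast at *
    linarith

lemma fn_disp (n : ℕ) (z : ℝ × ℝ) : |(fnF n z).1 - z.1| ≤ 1 + √(2 * n) := by
  obtain ⟨v, h, hz⟩ := fn_exists_P z
  have h1 : (fnF n z).1 = (fnPhi n z.1 v).1 := by rw [hz, fn_F_P _ _ h]; rfl
  rw [h1]
  rcases le_or_gt v 0 with hv | hv
  · rw [fn_Phi_neg hv]; simp; positivity
  · obtain ⟨u, Z, hx, rfl⟩ := fn_exists_uZ z.1 hv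
    rw [hx, fn_Phi_uZ]
    have e : fnU n u Z + fnTau (fnZ n u Z) - (u + fnTau Z) =
      (fnU n u Z - u) + (fnTau (fnZ n u Z) - fnTau Z) := by ring
    dsimp only
    rw [e]
    refine (abs_add_le _ _).trans (add_le_add (fn_Ubound _ _ _) ((fn_Tau_sub _ _).trans ?_))
    exact Real.sqrt_le_sqrt (fn_Zlin n u Z)

lemma fn_rate (n : ℕ) (z : ℝ × ℝ) : |((fnF n z).1 - z.1) / n| ≤ 3 / √(n : ℝ) := by
  rcases Nat.eq_zero_or_pos n with rfl | hn
  · simp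
  have hn1 : (1 : ℝ) ≤ n := by exact_mod_cast hn
  have hs : 1 ≤ √(n : ℝ) := by rw [Real.one_le_sqrt]; exact hn1
  have hss : √(n : ℝ) ^ 2 = n := Real.sq_sqrt (by positivity)
  have h2 : √(2 * n : ℝ) ≤ 2 * √(n : ℝ) := by
    apply Real.sqrt_le_iff.2; constructor
    · positivity
    · rw [mul_pow, hss]; linarith
  rw [abs_div, abs_of_pos (by linarith : (0 : ℝ) < n), div_le_div_iff₀ (by linarith) (by linarith)]
  have := fn_disp n z
  calc _ ≤ (3 * √(n : ℝ)) * √(n : ℝ) := by gcongr; linarith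
    _ = 3 * n := by linear_combination 3 * hss

lemma fn_fixed_half : fnF 1 (1 / 2, 0) = (1 / 2, 0) := by
  have : fnA (1 / 2) = 1 := by
    unfold fnA; rw [mul_one_div, Real.sin_pi_div_two, one_pow]
  have h : ((1 / 2, 0) : ℝ × ℝ) = fnP (1 / 2) 0 := by rw [fnP, this]; simp
  rw [h, fn_F_P _ _ (by rw [this]; norm_num), fn_Phi_neg le_rfl]

lemma fn_rot : rot (fnFc 1) = {(0 : EReal)} := by
  have hsub : (⋃ (K : Set Ann) (_ : IsCompact K), rotK (fnFc 1) K) = {(0 : EReal)} := by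
    apply subset_antisymm
    · intro ρ hρ
      simp only [mem_iUnion] at hρ
      obtain ⟨K, hK, z, n, hn, hz, ht⟩ := hρ
      have h0 : Tendsto (fun k => (((⇑(fnFc 1))^[n k] (z k)).1 - (z k).1) / (n k : ℝ))
          atTop (𝓝 0) := by
        rw [tendsto_zero_iff_abs_tendsto_zero]
        refine squeeze_zero (fun _ => abs_nonneg _) (g := fun k => 3 / √(n k : ℝ)) (fun k => ?_) ?_
        · simp only [Function.comp_apply]; rw [fn_iter]; exact fn_rate _ _
        · exact tendsto_const_nhds.div_atTop
            (Real.tendsto_sqrt_atTop.comp (tendsto_natCast_atTop_atTop.comp hn))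
      have h1 := (continuous_coe_real_ereal.tendsto 0).comp h0
      exact tendsto_nhds_unique ht h1
    · rintro _ rfl
      simp only [mem_iUnion]
      have hfix : ∀ n : ℕ, (⇑(fnFc 1))^[n] (1 / 2, 0) = (1 / 2, 0) :=
        fun n => Function.iterate_fixed fn_fixed_half n
      refine ⟨{pA (1 / 2, 0)}, isCompact_singleton, fun _ => (1 / 2, 0), id, tendsto_id, ?_, ?_⟩
      · intro k; simp only [hfix]; simp
      · simp only [hfix]; simp
  rw [rot, hsub, closure_singleton]

/-! ### The disk -/

lemma fn_disk : IsOpenTopDisk {z : Ann | z.1 ≠ 0} := by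
  let e := (AddCircle.openPartialHomeomorphCoe (1 : ℝ) 0).prod (OpenPartialHomeomorph.refl ℝ)
  have ht : e.target = {z : Ann | z.1 ≠ 0} := by
    ext z; simp [e]
  have hs : e.source = Ioo (0 : ℝ) 1 ×ˢ (univ : Set ℝ) := by
    ext z; simp [e]
  have hc : ContractibleSpace e.source := by
    rw [hs]
    exact ((convex_Ioo (0 : ℝ) 1).prod convex_univ).contractibleSpace ⟨(1 / 2, 0), by norm_num⟩
  rw [← ht]
  have hc' : ContractibleSpace e.target := e.toHomeomorphSourceTarget.symm.contractibleSpace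
  refine ⟨e.open_target, ?_, inferInstance⟩
  rw [isConnected_iff_connectedSpace]
  infer_instance

lemma fn_A_ne {x : ℝ} (h : fnA x ≠ 0) : (x : T1) ≠ 0 := by
  intro hx
  obtain ⟨k, hk⟩ := (AddCircle.coe_eq_zero_iff 1).1 hx
  apply h
  simp at hk
  rw [fnA, ← hk, mul_comm, Real.sin_int_mul_pi]; simp

lemma fn_fix_sub : pA '' Function.fixedPoints (fnFc 1) ⊆ {z : Ann | z.1 ≠ 0} := by
  rintro _ ⟨z, hz, rfl⟩
  change (z.1 : T1) ≠ 0
  change fnF 1 z = z at hz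
  apply fn_A_ne
  obtain ⟨v, h, hzP⟩ := fn_exists_P z
  rcases le_or_gt v 0 with hv | hv
  · intro h0; linarith
  · obtain ⟨u, Z, hx, rfl⟩ := fn_exists_uZ z.1 hv
    rw [hzP, fn_F_P _ _ h] at hz
    have hmem := fn_Phi_mem 1 z.1 h
    rw [hx, fn_Phi_uZ] at hz hmem
    simp only [fnP, Prod.mk.injEq] at hz hmem
    obtain ⟨hz1, hz2⟩ := hz
    rw [hx] at h
    have hlog := Real.log_injOn_pos hmem h (neg_injective hz2)
    rw [hz1] at hlog
    have hZ : fnZ 1 u Z = Z := by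
      have := Real.exp_injective (add_right_cancel hlog); linarith
    have hU : fnU 1 u Z = u := by rw [hZ] at hz1; linarith
    have hY : fnY 1 u Z = Real.sin (2 * Real.pi * u) := by rw [← (fn_cosU 1 u Z).2, hU]
    have hinv := fn_inv u Z
    have hHZ := fn_HZ 1 u Z
    rw [hZ, mul_one] at hHZ
    rw [fnY, mul_one] at hY
    have hh : fnH u Z ≠ 0 := by
      intro h0
      rw [fnZ, h0] at hZ
      rw [h0] at hinv
      simp at hZ
      rw [hZ] at hinv; norm_num at hinv
    have hHle : fnH u Z ^ 2 ≤ 1 := by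
      nlinarith [sq_nonneg (Real.sin (2 * Real.pi * u)), sq_nonneg (fnH u Z * Z)]
    have hcos : Real.cos (fnH u Z) < 1 := by
      refine lt_of_le_of_ne (Real.cos_le_one _) fun hc => hh ?_
      have h1 : |fnH u Z| ≤ 1 := (sq_le_one_iff_abs_le_one _).1 hHle
      have h2 := abs_le.1 h1
      exact (Real.cos_eq_one_iff_of_lt_of_lt (by linarith [Real.pi_gt_three])
        (by linarith [Real.pi_gt_three])).1 hc
    have hsc := Real.sin_sq_add_cos_sq (fnH u Z)
    have hsum : Real.sin (2 * Real.pi * u) ^ 2 + (fnH u Z * Z) ^ 2 = 0 := by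
      have : (1 - Real.cos (fnH u Z)) *
          (Real.sin (2 * Real.pi * u) ^ 2 + (fnH u Z * Z) ^ 2) = 0 := by
        linear_combination -Real.sin (2 * Real.pi * u) * hY + (fnH u Z * Z) * hHZ
      exact (mul_eq_zero.1 this).resolve_left (by linarith)
    have hy0 : Real.sin (2 * Real.pi * u) = 0 := by
      nlinarith [sq_nonneg (fnH u Z * Z), sq_nonneg (Real.sin (2 * Real.pi * u))]
    have hz0 : Z = 0 := by
      have : fnH u Z * Z = 0 := by
        nlinarith [sq_nonneg (fnH u Z * Z), sq_nonneg (Real.sin (2 * Real.pi * u))]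
      exact (mul_eq_zero.1 this).resolve_left hh
    have hcc := Real.sin_sq_add_cos_sq (2 * Real.pi * u)
    have hA : fnA z.1 = 1 / 2 := by
      have e : 2 * (Real.pi * z.1) = (2 * Real.pi * u + Real.pi / 2) + 2 * Real.pi := by
        rw [hx, hz0, fnTau]; simp; ring
      have : Real.cos (2 * (Real.pi * z.1)) = 0 := by
        rw [e, Real.cos_add_two_pi, Real.cos_add_pi_div_two, hy0, neg_zero]
      rw [fnA, Real.sin_sq_eq_half_sub, this]; norm_num
    rw [hA]; norm_num

/-! ### Unbounded displacement -/

lemma fn_unbounded : ∃ K₀ : Set Ann, IsCompact K₀ ∧ ∀ M : ℝ, 0 < M →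
    ∃ (zc : ℝ × ℝ) (n : ℕ), 1 ≤ n ∧ pA zc ∈ K₀ ∧ pA ((⇑(fnFc 1))^[n] zc) ∈ K₀ ∧
      M ≤ |((⇑(fnFc 1))^[n] zc).1 - zc.1| := by
  refine ⟨{((1 / 2 : ℝ) : T1)} ×ˢ Icc (-1) 0, isCompact_singleton.prod isCompact_Icc, ?_⟩
  intro M hM
  obtain ⟨m, hm⟩ := exists_nat_gt M
  have hm1 : 1 ≤ m := by
    have : (0 : ℝ) < m := hM.trans hm
    exact_mod_cast this
  have hmr : (1 : ℝ) ≤ m := by exact_mod_cast hm1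
  have hpos : ∀ x Z, 0 < Real.exp (-Z) + fnA x := fun x Z =>
      add_pos_of_pos_of_nonneg (Real.exp_pos _) (fn_A_nonneg x)
  have hA : ∀ k : ℕ, fnA (1 / 2 + k) = 1 := by
    intro k
    induction k with
    | zero =>
      unfold fnA; rw [Nat.cast_zero, add_zero, mul_one_div, Real.sin_pi_div_two, one_pow]
    | succ k ih => rw [Nat.cast_succ, ← add_assoc, fn_A_per, ih]
  have hcos : Real.cos (2 * Real.pi * (1 / 4)) = 0 := by
    rw [show 2 * Real.pi * (1 / 4) = Real.pi / 2 by ring, Real.cos_pi_div_two]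
  have hsin : Real.sin (2 * Real.pi * (1 / 4)) = 1 := by
    rw [show 2 * Real.pi * (1 / 4) = Real.pi / 2 by ring, Real.sin_pi_div_two]
  have hH : fnH (1 / 4) 0 = 0 := by rw [fnH, hcos, zero_div]
  have hZ : ∀ s, fnZ s (1 / 4) 0 = s := by intro s; rw [fnZ, hH, hsin]; simp
  have hU : ∀ s, fnU s (1 / 4) 0 = 1 / 4 := by
    intro s
    have : fnQ s (1 / 4) 0 = 1 := by
      apply Complex.ext <;> simp only [fnQ, fnX, fnY, hH, hsin, hcos] <;> simp
    rw [fnU, this]; simp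
  let n := (m + 1) ^ 2 - 1
  have hn : (n : ℝ) = (m + 1 : ℝ) ^ 2 - 1 := by
    have : 1 ≤ (m + 1) ^ 2 := Nat.one_le_pow _ _ (by omega)
    simp only [n]; push_cast [Nat.cast_sub this]; ring
  have hT0 : 1 / 4 + fnTau 0 = 1 / 2 + ((1 : ℕ) : ℝ) := by simp [fnTau]; norm_num
  have hTn : 1 / 4 + fnTau n = 1 / 2 + ((m + 1 : ℕ) : ℝ) := by
    rw [fnTau, abs_of_nonneg (Nat.cast_nonneg n), hn, add_sub_cancel, Real.sqrt_sq (by positivity)]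
    push_cast; ring
  have hit : (⇑(fnFc 1))^[n] (fnP (1 / 4 + fnTau 0) (Real.exp (-0))) =
      fnP (1 / 4 + fnTau n) (Real.exp (-n)) := by
    rw [fn_iter, fn_F_P _ _ (hpos _ _), fn_Phi_uZ, hU, hZ]
  have hK : ∀ (k : ℕ) (Z : ℝ), 0 ≤ Z → pA (fnP (1 / 2 + k) (Real.exp (-Z))) ∈
      ({((1 / 2 : ℝ) : T1)} ×ˢ Icc (-1) 0 : Set Ann) := by
    intro k Z hZ0
    have h1 : Real.exp (-Z) ≤ 1 := by rw [Real.exp_le_one_iff]; linarith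
    have h2 := Real.exp_pos (-Z)
    refine ⟨?_, ?_, ?_⟩
    · have := congrArg Prod.fst (fn_pA_int (1 / 2, 0) k)
      simpa [pA, fnP] using this
    · simp only [pA, fnP, hA]
      have := Real.log_le_sub_one_of_pos (by linarith : 0 < Real.exp (-Z) + 1)
      linarith
    · simp only [pA, fnP, hA]
      have := Real.log_nonneg (by linarith : 1 ≤ Real.exp (-Z) + 1)
      linarith
  refine ⟨fnP (1 / 4 + fnTau 0) (Real.exp (-0)), n, ?_, ?_, ?_, ?_⟩
  · simp only [n]
    have : 2 ^ 2 ≤ (m + 1) ^ 2 := Nat.pow_le_pow_left (by omega) 2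
    omega
  · rw [hT0]; exact hK _ _ le_rfl
  · rw [hit, hTn]; exact hK _ _ (Nat.cast_nonneg n)
  · rw [hit, hTn, hT0]
    simp only [fnP]
    rw [abs_of_nonneg] <;> push_cast <;> linarith

/-- **Proposition 5.2.** There is an irrotational measure-preserving homeomorphism
`f_none` of the open annulus whose lifted fixed point set projects into an open
topological disk, and for which the unbounded displacement already occurs within a
single compact set. -/
theorem exists_f_none :
    ∃ (f : Ann ≃ₜ Ann) (fc : (ℝ × ℝ) ≃ₜ (ℝ × ℝ)) (μ : Measure Ann),
      IsotopicToId f ∧ InvariantFullMeasure f μ ∧ IsLift f fc ∧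
      rot fc = {(0 : EReal)} ∧
      (∃ U : Set Ann, IsOpenTopDisk U ∧ pA '' Function.fixedPoints fc ⊆ U) ∧
      (∃ K₀ : Set Ann, IsCompact K₀ ∧ ∀ M : ℝ, 0 < M →
        ∃ (zc : ℝ × ℝ) (n : ℕ), 1 ≤ n ∧ pA zc ∈ K₀ ∧ pA ((⇑fc)^[n] zc) ∈ K₀ ∧
          M ≤ |((⇑fc)^[n] zc).1 - zc.1|) := by
  obtain ⟨μ, hμ⟩ := fn_exists_measure
  exact ⟨fnfH 1, fnFc 1, μ, fn_isotopic, hμ, fn_lift, fn_rot, ⟨_, fn_disk, fn_fix_sub⟩, fn_unbounded⟩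
end
end
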